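/- arXiv:1502.03415 — 4 statements merged into one kernel-verified Lean document; each statement's English description precedes it below -/
import Mathlib

section
/- (Backstepping case.) Consider the strict-feedback system dy/dt = h₁(y) + h₂(y)x, dx/dt = f(y,x) + g(y,x)u with y ∈ ℝ^{n_y}, x ∈ ℝ, u ∈ ℝ, where h₁, h₂, f, g are smooth, h₁(0) = 0, f(0,0) = 0, and g(y,x) ≠ 0 for all (y,x). Set H₁ := Dh₁(0), H₂ := h₂(0), F₁ := D_y f(0,0), F₂ := ∂f/∂x(0,0), G := g(0,0), and let A be the (n_y+1)×(n_y+1) block matrix [[H₁, H₂],[F₁, F₂]] and B := [0; G]. Assume: for every K_y ∈ ℝ^{1×n_y} and every positive definite P_y ∈ ℝ^{n_y×n_y} with P_y(H₁ + H₂K_y) + (H₁ + H₂K_y)ᵀP_y negative definite, there exists a smooth proper positive definite function V_y: ℝ^{n_y} → ℝ≥0 with (1/2)·H(V_y)(0) = P_y and such that for every y ≠ 0, ∇V_y(y)ᵀh₂(y) = 0 implies ∇V_y(y)·h₁(y) < 0. Then for every K ∈ ℝ^{1×(n_y+1)} such that A + BK is Hurwitz, there exists a smooth map α₀: ℝ^{n_y+1}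 → ℝ with α₀(0) = 0 and Dα₀(0) = K such that the origin of the closed-loop system (dy/dt, dx/dt) = (h₁(y) + h₂(y)x, f(y,x) + g(y,x)α₀(y,x)) is globally asymptotically stable. -/
open Matrix Filter Topology Asymptotics

noncomputable section

/-- `V` is proper: `V χ → ∞` as `‖χ‖ → ∞`. -/
def IsProper {E : Type*} [NormedAddCommGroup E] (V : E → ℝ) : Prop :=
  Filter.Tendsto V (Bornology.cobounded E) Filter.atTop

/-- `V` is positive definite: `V 0 = 0` and `V x > 0` for `x ≠ 0`. -/
def IsPosDefFn {E : Type*} [NormedAddCommGroup E] (V : E → ℝ) : Prop :=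
  V 0 = 0 ∧ ∀ x : E, x ≠ 0 → 0 < V x

/-- The Hessian matrix of `V` at `x`. -/
def hessianAt {n : ℕ} (V : (Fin n → ℝ) → ℝ) (x : Fin n → ℝ) :
    Matrix (Fin n) (Fin n) ℝ :=
  Matrix.of fun i j => iteratedFDeriv ℝ 2 V x ![Pi.single i 1, Pi.single j 1]

/-- A real square matrix is Hurwitz if all of its (complex) eigenvalues have
negative real part. -/
def Hurwitz {ι : Type*} [Fintype ι] [DecidableEq ι] (M : Matrix ι ι ℝ) : Prop :=
  ∀ μ : ℂ, μ ∈ spectrum ℂ (M.map (algebraMap ℝ ℂ)) → μ.re < 0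

/-- Global asymptotic stability of the origin for `χ' = F (χ)`:
(i) Lyapunov stability of the origin, and (ii) for every initial condition there is a
solution defined on all of `[0, ∞)` converging to the origin (for a locally Lipschitz
vector field, by uniqueness of solutions, this is equivalent to requiring every maximal
solution to be defined on `[0,∞)` and to converge to the origin). -/
def IsGAS {E : Type*} [NormedAddCommGroup E] [NormedSpace ℝ E] (F : E → E) : Prop :=
  (∀ ε > 0, ∃ δ > 0, ∀ (χ : ℝ → E) (T : ℝ),
      (∀ t ∈ Set.Ico (0:ℝ) T, HasDerivAt χ (F (χ t)) t) →
      ‖χ 0‖ ≤ δ → ∀ t ∈ Set.Ico (0:ℝ) T, ‖χ t‖ ≤ ε) ∧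
  (∀ x₀ : E, ∃ χ : ℝ → E, χ 0 = x₀ ∧ (∀ t : ℝ, 0 ≤ t → HasDerivAt χ (F (χ t)) t) ∧
      Filter.Tendsto χ Filter.atTop (nhds 0))

/-!
Since `M = A + B K` is Hurwitz, there is `P > 0` with `P M + Mᵀ P < 0`: the Cayley transform of `M`
has spectral radius less than one, so a partial sum of `∑ (C ^ k)ᴴ C ^ k` already solves the
corresponding discrete-time inequality. Completing the square in `x` writes the form of `P` as
`yᵀ Q y + p (x - k y) ^ 2`, and restricting to `x = k y` shows that `Q` is a Lyapunov matrix of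
the `y`-subsystem under the linear virtual control `x = k y`. The assumption therefore supplies a
control Lyapunov function `V` with Hessian `2 Q`, which the gain `k` decreases near the origin.

At each other point some constant control value decreases `V`. For fixed `y` the decrease condition
is convex in the control, so a partition of unity glues these values to the linear gain. This gives
a smooth virtual control `α` with `α = k` near the origin. Then `W = V y + p (x - α y) ^ 2` is a
control Lyapunov function of the full system: where the input does not act on `W` one has
`x = α y`, and there `W` decreases because `V` does. Its Hessian is `2 P`, so `K` decreases `W` near
the origin and the same gluing produces `α₀`. Global asymptotic stability is Lyapunov's theorem.
-/

section LyapunovFunctions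

variable {E : Type*} [NormedAddCommGroup E] {V : E → ℝ}

theorem IsProper.isCompact_sublevel [ProperSpace E] (hp : IsProper V) (hV : Continuous V)
    (c : ℝ) : IsCompact {x | V x ≤ c} := by
  refine Metric.isCompact_of_isClosed_isBounded (isClosed_le hV continuous_const) ?_
  rw [Bornology.isBounded_def]
  filter_upwards [hp.eventually_gt_atTop c] with x hx using not_le.2 hx

theorem IsPosDefFn.nonneg (hpd : IsPosDefFn V) (x : E) : 0 ≤ V x := by
  rcases eq_or_ne x 0 with rfl | hx
  exacts [hpd.1.ge, (hpd.2 x hx).le]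

theorem IsPosDefFn.exists_pos_forall_norm_lt [ProperSpace E] (hpd : IsPosDefFn V)
    (hp : IsProper V) (hV : Continuous V) {ε : ℝ} (hε : 0 < ε) :
    ∃ m > 0, ∀ x, V x < m → ‖x‖ < ε := by
  have hcompact : IsCompact ({x | V x ≤ 1} ∩ {x | ε ≤ ‖x‖}) :=
    (hp.isCompact_sublevel hV 1).inter_right (isClosed_le continuous_const continuous_norm)
  obtain ⟨m, hm, hmV⟩ := hcompact.exists_forall_le' hV.continuousOn (a := 0) fun x hx =>
    hpd.2 x (norm_pos_iff.1 (hε.trans_le hx.2))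
  refine ⟨min 1 m, lt_min one_pos hm, fun x hx => ?_⟩
  by_contra! hxε
  exact (hx.trans_le (min_le_right _ _)).not_ge
    (hmV x ⟨(hx.trans_le (min_le_left _ _)).le, hxε⟩)

variable [NormedSpace ℝ E] {F : E → E}

theorem IsPosDefFn.fderiv_zero (hpd : IsPosDefFn V) : fderiv ℝ V 0 = 0 :=
  IsLocalMin.fderiv_eq_zero (Eventually.of_forall fun x => hpd.1.le.trans (hpd.nonneg x))

theorem antitoneOn_comp_add_mul (hV : Differentiable ℝ V) {m : ℝ} {χ : ℝ → E} {D : Set ℝ}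
    (hD : Convex ℝ D) (hχ : ∀ t ∈ D, HasDerivAt χ (F (χ t)) t)
    (hm : ∀ t ∈ D, fderiv ℝ V (χ t) (F (χ t)) ≤ -m) :
    AntitoneOn (fun t => V (χ t) + m * t) D := by
  have hderiv : ∀ t ∈ D, HasDerivAt (fun t => V (χ t) + m * t)
      (fderiv ℝ V (χ t) (F (χ t)) + m) t := fun t ht => by
    simpa using ((hV (χ t)).hasFDerivAt.comp_hasDerivAt t (hχ t ht)).fun_add
      ((hasDerivAt_id t).const_mul m)
  refine antitoneOn_of_hasDerivWithinAt_nonpos hD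
    (fun t ht => (hderiv t ht).continuousAt.continuousWithinAt)
    (fun t ht => (hderiv t (interior_subset ht)).hasDerivWithinAt) fun t ht => ?_
  linarith [hm t (interior_subset ht)]

theorem antitoneOn_comp (hV : Differentiable ℝ V) (hdec : ∀ x, fderiv ℝ V x (F x) ≤ 0)
    {χ : ℝ → E} {D : Set ℝ} (hD : Convex ℝ D) (hχ : ∀ t ∈ D, HasDerivAt χ (F (χ t)) t) :
    AntitoneOn (V ∘ χ) D := by
  simpa [Function.comp_def] using
    antitoneOn_comp_add_mul hV (m := 0) hD hχ fun t _ => by simpa using hdec (χ t)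

open scoped Manifold in
theorem exists_forall_hasDerivAt_of_hasCompactSupport [CompleteSpace E] (hF : ContDiff ℝ 1 F)
    (hF' : HasCompactSupport F) (x₀ : E) :
    ∃ χ : ℝ → E, χ 0 = x₀ ∧ ∀ t, HasDerivAt χ (F (χ t)) t := by
  obtain ⟨K, hK⟩ := hF.lipschitzWith_of_hasCompactSupport hF' one_ne_zero
  obtain ⟨C, hC⟩ := hF'.exists_bound_of_continuous hF.continuous
  -- The Picard–Lindelöf time span depends only on `K` and `C`, hence not on the initial point.
  have hlocal : ∀ x, ∃ γ : ℝ → E, γ 0 = x ∧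
      IsMIntegralCurveOn (I := 𝓘(ℝ, E)) γ F (Set.Ioo (-1) 1) := fun x => by
    have hPL : IsPicardLindelof (fun _ => F) (tmin := -1) (tmax := 1) ⟨0, by simp⟩ x
        C.toNNReal 0 C.toNNReal K :=
      .of_time_independent (fun y _ => (hC y).trans (Real.le_coe_toNNReal C))
        hK.lipschitzOnWith (by simp)
    obtain ⟨γ, hγ0, hγ⟩ := hPL.exists_eq_forall_mem_Icc_hasDerivWithinAt₀
    refine ⟨γ, hγ0, fun t ht => ?_⟩
    exact ((hγ t (Set.Ioo_subset_Icc_self ht)).mono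
      Set.Ioo_subset_Icc_self).hasFDerivWithinAt.hasMFDerivWithinAt
  obtain ⟨χ, hχ0, hχ⟩ := exists_isMIntegralCurve_of_isMIntegralCurveOn (I := 𝓘(ℝ, E))
    (contMDiff_vectorSpace_iff_contDiff.2 hF) one_pos hlocal x₀
  refine ⟨χ, hχ0, fun t => ?_⟩
  have hχt : HasFDerivAt χ ((1 : ℝ →L[ℝ] ℝ).smulRight (F (χ t))) t := (hχ t).hasFDerivAt
  simpa using hχt.hasDerivAt

theorem exists_forall_nonneg_hasDerivAt_of_isCompact_sublevel [FiniteDimensional ℝ E]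
    (hF : ContDiff ℝ 1 F) (hV : Differentiable ℝ V) (hdec : ∀ x, fderiv ℝ V x (F x) ≤ 0) {x₀ : E}
    (hx₀ : IsCompact {x | V x ≤ V x₀}) :
    ∃ χ : ℝ → E, χ 0 = x₀ ∧ ∀ t, 0 ≤ t → HasDerivAt χ (F (χ t)) t := by
  have : CompleteSpace E := FiniteDimensional.complete ℝ E
  obtain ⟨R, hR, hsub⟩ := hx₀.isBounded.subset_closedBall_lt 0 0
  -- Truncating `F` outside the sublevel set makes it complete; `V` then keeps the solution inside.
  let φ : ContDiffBump (0 : E) := ⟨R, R + 1, hR, lt_add_one R⟩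
  obtain ⟨χ, hχ0, hχ⟩ := exists_forall_hasDerivAt_of_hasCompactSupport
    (F := fun x => φ x • F x) (φ.contDiff.smul hF) φ.hasCompactSupport.smul_right x₀
  have hanti := antitoneOn_comp hV (F := fun x => φ x • F x) (fun x => by
    simpa using mul_nonpos_of_nonneg_of_nonpos φ.nonneg (hdec x)) (convex_Ici 0) fun t _ => hχ t
  refine ⟨χ, hχ0, fun t ht => ?_⟩
  have hφ : φ (χ t) = 1 := φ.one_of_mem_closedBall <| hsub <| by
    simpa [hχ0] using hanti Set.self_mem_Ici ht ht
  simpa [hφ] using hχ t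

/-- `V` is a strict Lyapunov function for `χ' = F χ`. Smoothness of `V` is not part of the
definition: each result asks for the degree it needs. -/
structure IsStrictLyapunov (V : E → ℝ) (F : E → E) : Prop where
  isProper : IsProper V
  isPosDefFn : IsPosDefFn V
  fderiv_neg : ∀ x, x ≠ 0 → fderiv ℝ V x (F x) < 0

namespace IsStrictLyapunov

theorem fderiv_nonpos (h : IsStrictLyapunov V F) (x : E) : fderiv ℝ V x (F x) ≤ 0 := by
  rcases eq_or_ne x 0 with rfl | hx
  · simp [h.isPosDefFn.fderiv_zero]
  · exact (h.fderiv_neg x hx).le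

variable [FiniteDimensional ℝ E]

theorem exists_lt_of_pos (h : IsStrictLyapunov V F) (hF : Continuous F) (hV : ContDiff ℝ 1 V)
    {χ : ℝ → E} (hχ : ∀ t, 0 ≤ t → HasDerivAt χ (F (χ t)) t) {c : ℝ} (hc : 0 < c) :
    ∃ t, 0 ≤ t ∧ V (χ t) < c := by
  have := FiniteDimensional.proper ℝ E
  by_contra! hcon
  have hVd : Differentiable ℝ V := hV.differentiable one_ne_zero
  have hle : ∀ t, 0 ≤ t → V (χ t) ≤ V (χ 0) := fun t ht =>
    antitoneOn_comp hVd h.fderiv_nonpos (convex_Ici 0) hχ Set.self_mem_Ici ht ht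
  have hcompact : IsCompact ({x | V x ≤ V (χ 0)} ∩ {x | c ≤ V x}) :=
    (h.isProper.isCompact_sublevel hV.continuous _).inter_right
      (isClosed_le continuous_const hV.continuous)
  obtain ⟨m, hm, hmV⟩ := hcompact.exists_forall_le' (a := 0)
    (f := fun x => -fderiv ℝ V x (F x))
    ((hV.continuous_fderiv one_ne_zero).clm_apply hF).neg.continuousOn fun x hx => by
      refine neg_pos.2 (h.fderiv_neg x ?_)
      rintro rfl
      exact (hc.trans_le hx.2).ne' h.isPosDefFn.1
  have hanti := antitoneOn_comp_add_mul hVd (convex_Ici 0) hχ fun t ht =>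
    le_neg_of_le_neg (hmV _ ⟨hle t ht, hcon t ht⟩)
  have hT : 0 ≤ V (χ 0) / m := div_nonneg (h.isPosDefFn.nonneg _) hm.le
  have hend := hanti Set.self_mem_Ici hT hT
  simp only [mul_zero, add_zero, mul_div_cancel₀ _ hm.ne'] at hend
  linarith [hcon _ hT]

theorem tendsto_zero (h : IsStrictLyapunov V F) (hF : Continuous F) (hV : ContDiff ℝ 1 V)
    {χ : ℝ → E} (hχ : ∀ t, 0 ≤ t → HasDerivAt χ (F (χ t)) t) : Tendsto χ atTop (𝓝 0) := by
  have := FiniteDimensional.proper ℝ E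
  rw [Metric.tendsto_atTop]
  intro ε hε
  obtain ⟨m, hm, hmε⟩ := h.isPosDefFn.exists_pos_forall_norm_lt h.isProper hV.continuous hε
  obtain ⟨T, hT, hVT⟩ := h.exists_lt_of_pos hF hV hχ hm
  refine ⟨T, fun t ht => ?_⟩
  rw [dist_zero_right]
  exact hmε _ ((antitoneOn_comp (hV.differentiable one_ne_zero) h.fderiv_nonpos
    (convex_Ici 0) hχ hT (hT.trans ht) ht).trans_lt hVT)

theorem stable (h : IsStrictLyapunov V F) (hV : ContDiff ℝ 1 V) {ε : ℝ} (hε : 0 < ε) :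
    ∃ δ > 0, ∀ (χ : ℝ → E) (T : ℝ), (∀ t ∈ Set.Ico (0 : ℝ) T, HasDerivAt χ (F (χ t)) t) →
      ‖χ 0‖ ≤ δ → ∀ t ∈ Set.Ico (0 : ℝ) T, ‖χ t‖ ≤ ε := by
  have := FiniteDimensional.proper ℝ E
  obtain ⟨m, hm, hmε⟩ := h.isPosDefFn.exists_pos_forall_norm_lt h.isProper hV.continuous hε
  have hsmall : ∀ᶠ x in 𝓝 (0 : E), V x < m :=
    hV.continuous.continuousAt.eventually_lt_const (h.isPosDefFn.1.trans_lt hm)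
  obtain ⟨δ, hδ, hδV⟩ := Metric.nhds_basis_closedBall.eventually_iff.1 hsmall
  refine ⟨δ, hδ, fun χ T hχ hχ0 t ht => (hmε _ ?_).le⟩
  exact (antitoneOn_comp (hV.differentiable one_ne_zero) h.fderiv_nonpos (convex_Ico 0 T) hχ
    ⟨le_rfl, ht.1.trans_lt ht.2⟩ ht ht.1).trans_lt (hδV (mem_closedBall_zero_iff.2 hχ0))

theorem isGAS (h : IsStrictLyapunov V F) (hF : ContDiff ℝ 1 F) (hV : ContDiff ℝ 1 V) : IsGAS F := by
  have := FiniteDimensional.proper ℝ E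
  refine ⟨fun ε hε => h.stable hV hε, fun x₀ => ?_⟩
  obtain ⟨χ, hχ0, hχ⟩ := exists_forall_nonneg_hasDerivAt_of_isCompact_sublevel hF
    (hV.differentiable one_ne_zero) h.fderiv_nonpos
    (h.isProper.isCompact_sublevel hV.continuous (V x₀))
  exact ⟨χ, hχ0, hχ, h.tendsto_zero hF.continuous hV hχ⟩

end IsStrictLyapunov

end LyapunovFunctions

section ControlLyapunovFunctions

theorem isLittleO_clm_apply_sub {E F G : Type*}
    [NormedAddCommGroup E] [NormedSpace ℝ E] [NormedAddCommGroup F] [NormedSpace ℝ F]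
    [NormedAddCommGroup G] [NormedSpace ℝ G]
    {D : E → F →L[ℝ] G} {B : E →L[ℝ] F →L[ℝ] G} {u : E → F} {M : E →L[ℝ] F}
    (hD : HasFDerivAt D B 0) (hD0 : D 0 = 0) (hu : HasFDerivAt u M 0) (hu0 : u 0 = 0) :
    (fun z => D z (u z) - B z (M z)) =o[𝓝 0] fun z => ‖z‖ ^ 2 := by
  have hDo : (fun z => D z - B z) =o[𝓝 0] fun z => ‖z‖ := by
    simpa [hD0] using hD.isLittleO.norm_right
  have huo : (fun z => u z - M z) =o[𝓝 0] fun z => ‖z‖ := by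
    simpa [hu0] using hu.isLittleO.norm_right
  have huO : u =O[𝓝 0] fun z => ‖z‖ := by
    simpa [hu0] using hu.isBigO_sub.norm_right
  have hBO : (fun z => B z) =O[𝓝 0] fun z => ‖z‖ := (B.isBigO_id _).norm_right
  have happly : ∀ (L : E → F →L[ℝ] G) (w : E → F),
      (fun z => L z (w z)) =O[𝓝 0] fun z => ‖L z‖ * ‖w z‖ := fun L w =>
    .of_norm_le fun z => (L z).le_opNorm (w z)
  have h₁ : (fun z => (D z - B z) (u z)) =o[𝓝 0] fun z => ‖z‖ * ‖z‖ :=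
    (happly _ _).trans_isLittleO (hDo.norm_left.mul_isBigO huO.norm_left)
  have h₂ : (fun z => B z (u z - M z)) =o[𝓝 0] fun z => ‖z‖ * ‖z‖ :=
    (happly _ _).trans_isLittleO (hBO.norm_left.mul_isLittleO huo.norm_left)
  simpa [sq] using h₁.add h₂

theorem exists_pos_forall_mul_norm_sq_le {E : Type*} [NormedAddCommGroup E] [NormedSpace ℝ E]
    [ProperSpace E] {q : E → ℝ} (hq : Continuous q)
    (hsmul : ∀ (r : ℝ) (v : E), q (r • v) = r ^ 2 * q v) (hpos : ∀ v, v ≠ 0 → 0 < q v) :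
    ∃ c > 0, ∀ v, c * ‖v‖ ^ 2 ≤ q v := by
  obtain ⟨c, hc, hcq⟩ := (isCompact_sphere (0 : E) 1).exists_forall_le' hq.continuousOn (a := 0)
    fun v hv => hpos v (ne_zero_of_mem_unit_sphere ⟨v, hv⟩)
  refine ⟨c, hc, fun v => ?_⟩
  rcases eq_or_ne v 0 with rfl | hv
  · simpa using (hsmul 0 0).ge
  have hunit : ‖v‖⁻¹ • v ∈ Metric.sphere (0 : E) 1 := by
    simp [norm_smul, inv_mul_cancel₀ (norm_ne_zero_iff.2 hv)]
  calc c * ‖v‖ ^ 2 ≤ q (‖v‖⁻¹ • v) * ‖v‖ ^ 2 := by gcongr; exact hcq _ hunit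
    _ = q v := by rw [hsmul]; field_simp [norm_ne_zero_iff.2 hv]

variable {E : Type*} [NormedAddCommGroup E] [NormedSpace ℝ E] [FiniteDimensional ℝ E]

theorem eventually_clm_apply_neg {D : E → E →L[ℝ] ℝ} {B : E →L[ℝ] E →L[ℝ] ℝ} {F : E → E}
    {M : E →L[ℝ] E} (hD : HasFDerivAt D B 0) (hD0 : D 0 = 0) (hF : HasFDerivAt F M 0)
    (hF0 : F 0 = 0) (hneg : ∀ v, v ≠ 0 → B v (M v) < 0) :
    ∀ᶠ z in 𝓝 0, z ≠ 0 → D z (F z) < 0 := by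
  have := FiniteDimensional.proper ℝ E
  obtain ⟨c, hc, hcB⟩ := exists_pos_forall_mul_norm_sq_le (q := fun v => -B v (M v))
    (B.continuous.clm_apply M.continuous).neg (fun r v => by simp; ring)
    fun v hv => neg_pos.2 (hneg v hv)
  filter_upwards [(isLittleO_clm_apply_sub hD hD0 hF hF0).def (half_pos hc)] with z hz hz0
  have hdiff : D z (F z) - B z (M z) ≤ c / 2 * ‖z‖ ^ 2 := by
    simpa using (le_abs_self _).trans hz
  have : 0 < c * ‖z‖ ^ 2 := by positivity
  linarith [hcB z]

theorem exists_add_mul_neg {a b : ℝ} (hab : b = 0 → a < 0) : ∃ u, a + u * b < 0 := by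
  rcases eq_or_ne b 0 with hb | hb
  · exact ⟨0, by simpa using hab hb⟩
  · exact ⟨-(a + 1) / b, by rw [div_mul_cancel₀ _ hb]; linarith⟩

open scoped Manifold in
theorem exists_contDiff_forall_add_mul_neg {n : ℕ∞} {z₀ : E} {a b κ : E → ℝ}
    (ha : Continuous a) (hb : Continuous b) (hκ : ContDiff ℝ n κ)
    (hloc : ∀ᶠ z in 𝓝 z₀, z ≠ z₀ → a z + κ z * b z < 0)
    (hab : ∀ z, z ≠ z₀ → b z = 0 → a z < 0) :
    ∃ α : E → ℝ, ContDiff ℝ n α ∧ α =ᶠ[𝓝 z₀] κ ∧ ∀ z, z ≠ z₀ → a z + α z * b z < 0 := by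
  obtain ⟨R, hR, hball⟩ := Metric.eventually_nhds_iff_ball.1 hloc
  -- The admissible values at `z` form a convex set, so a partition of unity glues local choices.
  let t : E → Set ℝ := fun z =>
    {u | z ∈ Metric.closedBall z₀ (R / 2) → u = κ z} ∩ {u | z ≠ z₀ → a z + u * b z < 0}
  have hconvex : ∀ z, Convex ℝ (t z) := fun z => by
    refine .inter ?_ ?_
    · by_cases hz : z ∈ Metric.closedBall z₀ (R / 2) <;> simp [hz, convex_univ]
    · by_cases hz : z = z₀
      · simp [hz, convex_univ]
      · simpa [hz, mul_comm, lt_neg_iff_add_neg'] using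
          convex_halfSpace_lt (LinearMap.mulLeft ℝ (b z)).isLinear (-a z)
  have hlocal : ∀ z, ∃ U ∈ 𝓝 z, ∃ u : E → ℝ, ContMDiffOn 𝓘(ℝ, E) 𝓘(ℝ, ℝ) n u U ∧
      ∀ y ∈ U, u y ∈ t y := fun z => by
    rcases eq_or_ne z z₀ with rfl | hz
    · exact ⟨_, Metric.ball_mem_nhds z hR, κ, hκ.contMDiff.contMDiffOn,
        fun y hy => ⟨fun _ => rfl, hball y hy⟩⟩
    by_cases hzR : z ∈ Metric.ball z₀ R
    · exact ⟨_, Metric.isOpen_ball.mem_nhds hzR, κ, hκ.contMDiff.contMDiffOn,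
        fun y hy => ⟨fun _ => rfl, hball y hy⟩⟩
    obtain ⟨u, hu⟩ := exists_add_mul_neg (hab z hz)
    have hfar : ∀ᶠ y in 𝓝 z, y ∉ Metric.closedBall z₀ (R / 2) :=
      Metric.isClosed_closedBall.isOpen_compl.mem_nhds fun hzR' =>
        hzR (Metric.closedBall_subset_ball (half_lt_self hR) hzR')
    have hneg : ∀ᶠ y in 𝓝 z, a y + u * b y < 0 :=
      (ha.add (hb.const_mul u)).continuousAt.eventually_lt_const hu
    exact ⟨_, hfar.and hneg, fun _ => u, contMDiffOn_const,
      fun y hy => ⟨fun hyR => absurd hyR hy.1, fun _ => hy.2⟩⟩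
  obtain ⟨α, hα⟩ := exists_contMDiffMap_forall_mem_convex_of_local 𝓘(ℝ, E) hconvex hlocal
  refine ⟨α, contMDiff_iff_contDiff.1 α.contMDiff, ?_, fun z hz => (hα z).2 hz⟩
  filter_upwards [Metric.closedBall_mem_nhds z₀ (half_pos hR)] with z hz using (hα z).1 hz

end ControlLyapunovFunctions

section Backstepping

variable {E : Type*} [NormedAddCommGroup E] {V α : E → ℝ} {p : ℝ}

/-- The backstepping Lyapunov function: `V` plus the penalty `p (x - α y) ^ 2` for the deviation
of the state `x` from the virtual control `α y`. -/
def backstepFn (V α : E → ℝ) (p : ℝ) (z : E × ℝ) : ℝ :=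
  V z.1 + p * (z.2 - α z.1) ^ 2

theorem IsPosDefFn.backstepFn (hV : IsPosDefFn V) (hα0 : α 0 = 0) (hp : 0 < p) :
    IsPosDefFn (backstepFn V α p) := by
  refine ⟨by simp [_root_.backstepFn, hV.1, hα0], fun z hz => ?_⟩
  rcases eq_or_ne z.1 0 with hz1 | hz1
  · have hz2 : z.2 ≠ 0 := fun h => hz (Prod.ext hz1 h)
    simpa [_root_.backstepFn, hz1, hV.1, hα0] using by positivity
  · have := hV.2 _ hz1
    unfold _root_.backstepFn
    positivity

theorem IsProper.backstepFn [ProperSpace E] (hV : IsProper V) (hVc : Continuous V)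
    (hVnonneg : ∀ y, 0 ≤ V y) (hα : Continuous α) (hp : 0 < p) : IsProper (backstepFn V α p) := by
  refine tendsto_atTop.2 fun c => ?_
  have hcompact : IsCompact ((fun w : E × ℝ => (w.1, w.2 + α w.1)) ''
      ({y | V y ≤ c} ×ˢ Metric.closedBall 0 √(c / p))) :=
    ((hV.isCompact_sublevel hVc c).prod (isCompact_closedBall _ _)).image (by fun_prop)
  filter_upwards [Bornology.isBounded_def.1 hcompact.isBounded] with z hz
  by_contra! hzc
  unfold _root_.backstepFn at hzc
  refine hz ⟨(z.1, z.2 - α z.1), ⟨?_, ?_⟩, by simp⟩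
  · have : 0 ≤ p * (z.2 - α z.1) ^ 2 := by positivity
    exact (by linarith : V z.1 ≤ c)
  · have : (z.2 - α z.1) ^ 2 ≤ c / p := (le_div_iff₀' hp).2 (by linarith [hVnonneg z.1])
    simpa using Real.abs_le_sqrt this

variable [NormedSpace ℝ E]

theorem contDiff_backstepFn {n : ℕ∞} (hV : ContDiff ℝ n V) (hα : ContDiff ℝ n α) :
    ContDiff ℝ n (backstepFn V α p) :=
  (hV.comp contDiff_fst).add
    (contDiff_const.mul ((contDiff_snd.sub (hα.comp contDiff_fst)).pow 2))

theorem fderiv_backstepFn (hV : Differentiable ℝ V) (hα : Differentiable ℝ α) (z : E × ℝ) :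
    fderiv ℝ (backstepFn V α p) z = (fderiv ℝ V z.1).comp (.fst ℝ E ℝ) +
      (2 * p * (z.2 - α z.1)) • (.snd ℝ E ℝ - (fderiv ℝ α z.1).comp (.fst ℝ E ℝ)) := by
  have hfst : HasFDerivAt Prod.fst (.fst ℝ E ℝ) z := hasFDerivAt_fst
  have hdev := hasFDerivAt_snd.fun_sub ((hα z.1).hasFDerivAt.comp z hfst)
  refine (((hV z.1).hasFDerivAt.comp z hfst).add ((hdev.pow 2).const_mul p)).fderiv.trans ?_
  ext <;> simp <;> ring

theorem fderiv_fderiv_backstepFn_apply (hV : ContDiff ℝ 2 V) (hα : ContDiff ℝ 2 α)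
    {z : E × ℝ} (hz : z.2 = α z.1) (v w : E × ℝ) :
    fderiv ℝ (fderiv ℝ (backstepFn V α p)) z v w = fderiv ℝ (fderiv ℝ V) z.1 v.1 w.1 +
      2 * p * (v.2 - fderiv ℝ α z.1 v.1) * (w.2 - fderiv ℝ α z.1 w.1) := by
  have hfst : HasFDerivAt Prod.fst (.fst ℝ E ℝ) z := hasFDerivAt_fst
  have hcomp : ∀ {f : E → ℝ}, ContDiff ℝ 2 f →
      HasFDerivAt (fun y : E × ℝ => (fderiv ℝ f y.1).comp (.fst ℝ E ℝ)) _ z := fun hf =>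
    .clm_comp (((hf.fderiv_right (m := 1) (by norm_num [one_add_one_eq_two])).differentiable
      one_ne_zero z.1).hasFDerivAt.comp z hfst) (hasFDerivAt_const _ z)
  have hdev : HasFDerivAt (fun y : E × ℝ => 2 * p * (y.2 - α y.1)) _ z :=
    (hasFDerivAt_snd.fun_sub ((hα.differentiable two_ne_zero z.1).hasFDerivAt.comp z
      hfst)).const_mul (2 * p)
  rw [funext (fderiv_backstepFn (hV.differentiable two_ne_zero) (hα.differentiable two_ne_zero)),
    ((hcomp hV).fun_add (hdev.fun_smul ((hasFDerivAt_const _ z).fun_sub (hcomp hα)))).fderiv]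
  simp [hz]

/-- `V` is a control Lyapunov function for the control-affine system `χ' = F χ + u • G χ` with
scalar input `u`: wherever the input has no effect on `V`, the drift makes it decrease. -/
structure IsControlLyapunov (V : E → ℝ) (F G : E → E) : Prop where
  isProper : IsProper V
  isPosDefFn : IsPosDefFn V
  fderiv_neg : ∀ x, x ≠ 0 → fderiv ℝ V x (G x) = 0 → fderiv ℝ V x (F x) < 0

theorem IsControlLyapunov.exists_feedback [FiniteDimensional ℝ E] {F G : E → E}
    (h : IsControlLyapunov V F G) (hV : ContDiff ℝ 2 V) (hF : ContDiff ℝ 1 F)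
    (hG : ContDiff ℝ 1 G) (hF0 : F 0 = 0) (K : E →L[ℝ] ℝ)
    (hloc : ∀ v, v ≠ 0 → fderiv ℝ (fderiv ℝ V) 0 v (fderiv ℝ F 0 v + K v • G 0) < 0) :
    ∃ α : E → ℝ, ContDiff ℝ (⊤ : ℕ∞) α ∧ α =ᶠ[𝓝 0] K ∧
      IsStrictLyapunov V fun x => F x + α x • G x := by
  have hDV : ContDiff ℝ 1 (fderiv ℝ V) := hV.fderiv_right (by norm_num [one_add_one_eq_two])
  have hclosed : HasFDerivAt (fun x => F x + K x • G x) (fderiv ℝ F 0 + K.smulRight (G 0)) 0 := by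
    simpa using (hF.differentiable one_ne_zero 0).hasFDerivAt.fun_add
      (K.hasFDerivAt.fun_smul (hG.differentiable one_ne_zero 0).hasFDerivAt)
  have hlinear := eventually_clm_apply_neg (hDV.differentiable one_ne_zero 0).hasFDerivAt
    h.isPosDefFn.fderiv_zero hclosed (by simp [hF0]) (by simpa using hloc)
  obtain ⟨α, hα, hαK, hneg⟩ := exists_contDiff_forall_add_mul_neg (n := ⊤) (κ := K)
    (hDV.continuous.clm_apply hF.continuous) (hDV.continuous.clm_apply hG.continuous)
    K.contDiff (by simpa using hlinear) h.fderiv_neg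
  exact ⟨α, hα, hαK, h.isProper, h.isPosDefFn, by simpa using hneg⟩

theorem IsStrictLyapunov.backstep [ProperSpace E] {h₁ h₂ : E → E} {f g : E × ℝ → ℝ}
    (h : IsStrictLyapunov V fun y => h₁ y + α y • h₂ y) (hV : Differentiable ℝ V)
    (hα : Differentiable ℝ α) (hα0 : α 0 = 0) (hp : 0 < p) (hg : ∀ z, z ≠ 0 → g z ≠ 0) :
    IsControlLyapunov (backstepFn V α p) (fun z => (h₁ z.1 + z.2 • h₂ z.1, f z))
      fun z => (0, g z) := by
  refine ⟨h.isProper.backstepFn hV.continuous h.isPosDefFn.nonneg hα.continuous hp,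
    h.isPosDefFn.backstepFn hα0 hp, fun z hz hzg => ?_⟩
  have hdev : z.2 = α z.1 := by
    simpa [fderiv_backstepFn hV hα, hp.ne', hg z hz, sub_eq_zero] using hzg
  have hz1 : z.1 ≠ 0 := fun hz1 => hz (Prod.ext hz1 (by simp [hdev, hz1, hα0]))
  simpa [fderiv_backstepFn hV hα, hdev] using h.fderiv_neg z.1 hz1

theorem fderiv_strictFeedback_zero {h₁ h₂ : E → E} {f : E × ℝ → ℝ}
    (hh₁ : Differentiable ℝ h₁) (hh₂ : Differentiable ℝ h₂) (hf : Differentiable ℝ f) :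
    fderiv ℝ (fun z : E × ℝ => (h₁ z.1 + z.2 • h₂ z.1, f z)) 0 =
      ((fderiv ℝ h₁ 0).comp (.fst ℝ E ℝ) + (ContinuousLinearMap.snd ℝ E ℝ).smulRight (h₂ 0)).prod
        (fderiv ℝ f 0) := by
  have hfst : HasFDerivAt Prod.fst (.fst ℝ E ℝ) (0 : E × ℝ) := hasFDerivAt_fst
  have hy := ((hh₁ 0).hasFDerivAt.comp (0 : E × ℝ) hfst).add
    (hasFDerivAt_snd.smul ((hh₂ 0).hasFDerivAt.comp (0 : E × ℝ) hfst))
  refine (hy.prodMk (hf 0).hasFDerivAt).fderiv.trans ?_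
  simp

theorem exists_backstepping_feedback [FiniteDimensional ℝ E] {h₁ h₂ : E → E} {f g : E × ℝ → ℝ}
    (hh₁ : ContDiff ℝ 1 h₁) (hh₂ : ContDiff ℝ 1 h₂) (hf : ContDiff ℝ 1 f) (hg : ContDiff ℝ 1 g)
    (hh₁0 : h₁ 0 = 0) (hf0 : f 0 = 0) (hgne : ∀ z, z ≠ 0 → g z ≠ 0)
    (hV : ContDiff ℝ 2 V) (hclf : IsControlLyapunov V h₁ h₂) (hp : 0 < p)
    (k : E →L[ℝ] ℝ) (K : E × ℝ →L[ℝ] ℝ)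
    (hloc : ∀ v : E × ℝ, v ≠ 0 →
      fderiv ℝ (fderiv ℝ V) 0 v.1 (fderiv ℝ h₁ 0 v.1 + v.2 • h₂ 0) + 2 * p * (v.2 - k v.1) *
        (fderiv ℝ f 0 v + K v * g 0 - k (fderiv ℝ h₁ 0 v.1 + v.2 • h₂ 0)) < 0) :
    ∃ α₀ : E × ℝ → ℝ, ContDiff ℝ (⊤ : ℕ∞) α₀ ∧ α₀ =ᶠ[𝓝 0] K ∧
      IsGAS fun z : E × ℝ => (h₁ z.1 + z.2 • h₂ z.1, f z + g z * α₀ z) := by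
  have := FiniteDimensional.proper ℝ E
  obtain ⟨α, hα, hαk, hlyap⟩ := hclf.exists_feedback hV hh₁ hh₂ hh₁0 k fun y hy => by
    simpa using hloc (y, k y) fun h => hy (congrArg Prod.fst h)
  have hα2 : ContDiff ℝ 2 α := hα.of_le ENat.LEInfty.out
  have hα0 : α 0 = 0 := by simp [hαk.eq_of_nhds]
  have hDα : fderiv ℝ α 0 = k := hαk.fderiv_eq.trans k.fderiv
  have hW : ContDiff ℝ 2 (backstepFn V α p) := contDiff_backstepFn (n := 2) hV hα2
  have hdrift : ContDiff ℝ 1 fun z : E × ℝ => (h₁ z.1 + z.2 • h₂ z.1, f z) := by fun_prop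
  have hinput : ContDiff ℝ 1 fun z : E × ℝ => ((0 : E), g z) := by fun_prop
  obtain ⟨α₀, hα₀, hα₀K, hlyap₀⟩ := (hlyap.backstep (f := f)
    (hV.differentiable two_ne_zero) (hα2.differentiable two_ne_zero) hα0 hp hgne).exists_feedback
    hW hdrift hinput (by simp [hh₁0, hf0]) K fun v hv => by
      simpa [fderiv_fderiv_backstepFn_apply hV hα2 (z := 0) (by simp [hα0]),
        fderiv_strictFeedback_zero (hh₁.differentiable one_ne_zero) (hh₂.differentiable one_ne_zero)
          (hf.differentiable one_ne_zero), hDα]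
        using hloc v hv
  refine ⟨α₀, hα₀, hα₀K, ?_⟩
  simpa [mul_comm] using hlyap₀.isGAS
    (hdrift.add ((hα₀.of_le ENat.LEInfty.out).smul hinput)) (hW.of_le one_le_two)

end Backstepping

section LyapunovEquation

theorem norm_lt_one_of_re_sub_one_div_add_one_neg {μ : ℂ} (h : ((μ - 1) / (μ + 1)).re < 0) :
    ‖μ‖ < 1 := by
  have hμ : μ + 1 ≠ 0 := fun h0 => by simp [h0] at h
  have hre : ((μ - 1) / (μ + 1)).re = (Complex.normSq μ - 1) / Complex.normSq (μ + 1) := by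
    simp only [Complex.div_re, Complex.normSq_apply, Complex.add_re, Complex.sub_re,
      Complex.add_im, Complex.sub_im, Complex.one_re, Complex.one_im]
    ring
  rw [hre, div_lt_iff₀ (Complex.normSq_pos.2 hμ), zero_mul, sub_neg,
    Complex.normSq_eq_norm_sq] at h
  exact (sq_lt_one_iff₀ (norm_nonneg μ)).1 h

theorem isUnit_one_sub_of_spectrum_re_neg {A : Type*} [Ring A] [Algebra ℂ A] {a : A}
    (ha : ∀ μ ∈ spectrum ℂ a, μ.re < 0) : IsUnit (1 - a) := by
  by_contra h
  exact absurd (ha 1 (by simpa [spectrum.mem_iff] using h)) (by simp)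

theorem norm_lt_one_of_mem_spectrum_cayley {A : Type*} [Ring A] [Algebra ℂ A] {a c : A}
    (ha : ∀ μ ∈ spectrum ℂ a, μ.re < 0) (hc : c * (1 - a) = 1 + a)
    {μ : ℂ} (hμ : μ ∈ spectrum ℂ c) : ‖μ‖ < 1 := by
  have hmul : (algebraMap ℂ A μ - c) * (1 - a) = algebraMap ℂ A (μ - 1) - (μ + 1) • a := by
    rw [sub_mul, hc, Algebra.smul_def]
    simp only [map_sub, map_add, map_one]
    noncomm_ring
  have hsing : ¬IsUnit (algebraMap ℂ A (μ - 1) - (μ + 1) • a) := by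
    rwa [← hmul, (isUnit_one_sub_of_spectrum_re_neg ha).mul_right_iff]
  have hμ1 : μ + 1 ≠ 0 := fun h => hsing <| by
    rw [h, zero_smul, sub_zero, eq_neg_of_add_eq_zero_left h]
    exact (IsUnit.mk0 _ (by norm_num)).map (algebraMap ℂ A)
  refine norm_lt_one_of_re_sub_one_div_add_one_neg (ha _ fun hdiv => hsing ?_)
  have := hdiv.smul (Units.mk0 _ hμ1)
  convert this using 1
  simp [Units.smul_def, smul_sub, Algebra.algebraMap_eq_smul_one, smul_smul, mul_div_cancel₀ _ hμ1]

theorem exists_norm_pow_lt_one {A : Type*} [NormedRing A] [NormedAlgebra ℂ A] [CompleteSpace A]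
    {a : A} (ha : ∀ μ ∈ spectrum ℂ a, ‖μ‖ < 1) : ∃ n ≠ 0, ‖a ^ n‖ < 1 := by
  cases subsingleton_or_nontrivial A
  · exact ⟨1, one_ne_zero, by simp [Subsingleton.elim a 0]⟩
  have hr : spectralRadius ℂ a < 1 := by
    exact_mod_cast spectrum.spectralRadius_lt_of_forall_lt a (r := 1) fun μ hμ => ha μ hμ
  obtain ⟨n, hlt, hn⟩ := (((spectrum.pow_nnnorm_pow_one_div_tendsto_nhds_spectralRadius
    a).eventually_lt_const hr).and (eventually_ne_atTop 0)).exists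
  refine ⟨n, hn, ?_⟩
  by_contra! hge
  exact hlt.not_ge (ENNReal.one_le_rpow (by exact_mod_cast hge) (by positivity))

section CStarAlgebra

variable {A : Type*} [CStarAlgebra A] [PartialOrder A] [StarOrderedRing A]

theorem isStrictlyPositive_one_sub_star_mul_self {d : A} (hd : ‖d‖ < 1) :
    IsStrictlyPositive (1 - star d * d) := by
  have hle : star d * d ≤ algebraMap ℝ A (‖d‖ ^ 2) := by
    simpa [CStarRing.norm_star_mul_self, sq] using
      (IsSelfAdjoint.star_mul_self d).le_algebraMap_norm_self
  have hgap : 0 < 1 - ‖d‖ ^ 2 := sub_pos.2 ((sq_lt_one_iff₀ (norm_nonneg d)).2 hd)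
  refine (isStrictlyPositive_algebraMap (A := A) hgap).of_le ?_
  simpa using sub_le_sub_left hle 1

theorem exists_isStrictlyPositive_stein {c : A} (hc : ∀ μ ∈ spectrum ℂ c, ‖μ‖ < 1) :
    ∃ p : A, IsStrictlyPositive p ∧ IsStrictlyPositive (p - star c * p * c) := by
  obtain ⟨n, hn, hnorm⟩ := exists_norm_pow_lt_one hc
  let p : A := ∑ k ∈ Finset.range n, star (c ^ k) * c ^ k
  have htele : p - star c * p * c = 1 - star (c ^ n) * c ^ n := by
    have hshift : star c * p * c = ∑ k ∈ Finset.range n, star (c ^ (k + 1)) * c ^ (k + 1) := by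
      simp only [p, Finset.mul_sum, Finset.sum_mul, pow_succ, star_mul, mul_assoc]
    rw [hshift, ← Finset.sum_sub_distrib, Finset.sum_range_sub']
    simp
  refine ⟨p, isStrictlyPositive_one.of_le ?_, ?_⟩
  · simpa [p] using Finset.single_le_sum (f := fun k => star (c ^ k) * c ^ k)
      (fun k _ => star_mul_self_nonneg _) (Finset.mem_range.2 (Nat.pos_of_ne_zero hn))
  · exact htele ▸ isStrictlyPositive_one_sub_star_mul_self hnorm

theorem exists_isStrictlyPositive_lyapunov {a : A} (ha : ∀ μ ∈ spectrum ℂ a, μ.re < 0) :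
    ∃ p : A, IsStrictlyPositive p ∧ IsStrictlyPositive (-(p * a + star a * p)) := by
  have hunit := isUnit_one_sub_of_spectrum_re_neg ha
  obtain ⟨c, hc⟩ : ∃ c, c * (1 - a) = 1 + a :=
    ⟨(1 + a) * hunit.unit⁻¹, by simp [mul_assoc]⟩
  obtain ⟨p, hp, hstein⟩ := exists_isStrictlyPositive_stein fun μ hμ =>
    norm_lt_one_of_mem_spectrum_cayley ha hc hμ
  refine ⟨p, hp, ?_⟩
  have hcongr : star (1 - a) * (p - star c * p * c) * (1 - a) =
      (2 : ℝ) • -(p * a + star a * p) := by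
    calc _ = star (1 - a) * p * (1 - a) - star (c * (1 - a)) * p * (c * (1 - a)) := by
          simp only [star_mul]; noncomm_ring
      _ = _ := by
          rw [hc, two_smul]
          simp only [star_sub, star_add, star_one]
          noncomm_ring
  have := hunit.isStrictlyPositive_star_left_conjugate_iff.2 hstein
  rw [hcongr] at this
  simpa using this.smul (inv_pos.2 (two_pos : (0 : ℝ) < 2))

end CStarAlgebra

open scoped ComplexOrder in
theorem posDef_map_re {ι : Type*} [Finite ι] {P : Matrix ι ι ℂ} (hP : P.PosDef) :
    (P.map Complex.re).PosDef := by
  have := Fintype.ofFinite ι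
  refine .of_dotProduct_mulVec_pos ?_ fun x hx => ?_
  · ext i j
    simpa using congrArg Complex.re (hP.isHermitian.apply i j)
  · have hx' : (fun i => (x i : ℂ)) ≠ 0 := fun h =>
      hx (funext fun i => Complex.ofReal_eq_zero.1 (congrFun h i))
    simpa [dotProduct, mulVec] using (Complex.pos_iff.1 (hP.dotProduct_mulVec_pos hx')).1

variable {ι : Type*} [Fintype ι]

open scoped Matrix.Norms.L2Operator MatrixOrder ComplexOrder in
theorem Hurwitz.exists_posDef_lyapunov [DecidableEq ι] {M : Matrix ι ι ℝ} (hM : Hurwitz M) :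
    ∃ P : Matrix ι ι ℝ, P.PosDef ∧ (-(P * M + Mᵀ * P)).PosDef := by
  obtain ⟨P, hP, hPM⟩ := exists_isStrictlyPositive_lyapunov hM
  refine ⟨P.map Complex.re, posDef_map_re hP.posDef, ?_⟩
  convert posDef_map_re hPM.posDef using 1
  ext i j
  simp [Matrix.mul_apply, Matrix.star_eq_conjTranspose]

theorem posDef_neg_lyapunov_iff {P M : Matrix ι ι ℝ} (hP : Pᵀ = P) :
    (-(P * M + Mᵀ * P)).PosDef ↔ ∀ x, x ≠ 0 → x ⬝ᵥ P *ᵥ (M *ᵥ x) < 0 := by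
  have hsymm : (-(P * M + Mᵀ * P)).IsHermitian := by
    simp [Matrix.IsHermitian, hP, add_comm]
  have hform : ∀ x, x ⬝ᵥ (-(P * M + Mᵀ * P)) *ᵥ x = -2 * (x ⬝ᵥ P *ᵥ (M *ᵥ x)) := fun x => by
    have htranspose : x ⬝ᵥ Mᵀ *ᵥ (P *ᵥ x) = x ⬝ᵥ P *ᵥ (M *ᵥ x) := by
      rw [dotProduct_mulVec, vecMul_transpose, dotProduct_mulVec x P, ← mulVec_transpose, hP,
        dotProduct_comm]
    rw [neg_mulVec, dotProduct_neg, add_mulVec, dotProduct_add, ← mulVec_mulVec, ← mulVec_mulVec,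
      htranspose]
    ring
  rw [posDef_iff_dotProduct_mulVec]
  simp only [hform, hsymm, star_trivial, true_and, ne_eq]
  exact forall₂_congr fun x _ => by constructor <;> intro <;> linarith

theorem exists_completeSquare {P : Matrix (ι ⊕ Fin 1) (ι ⊕ Fin 1) ℝ} (hP : P.PosDef) :
    ∃ (p : ℝ) (k : ι → ℝ) (Q : Matrix ι ι ℝ), 0 < p ∧ Q.PosDef ∧ ∀ y w x u,
      (y ⊕ᵥ ![x]) ⬝ᵥ P *ᵥ (w ⊕ᵥ ![u]) = y ⬝ᵥ Q *ᵥ w + p * (x - k ⬝ᵥ y) * (u - k ⬝ᵥ w) := by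
  have hsymm : Pᵀ = P := by simpa [Matrix.IsHermitian] using hP.isHermitian
  let p : ℝ := P (.inr 0) (.inr 0)
  let q : ι → ℝ := fun i => P (.inl i) (.inr 0)
  let k : ι → ℝ := -(p⁻¹ • q)
  let Q : Matrix ι ι ℝ := P.toBlocks₁₁ - p⁻¹ • vecMulVec q q
  have hp : 0 < p := hP.diag_pos
  have hmul : ∀ w u, P *ᵥ (w ⊕ᵥ ![u]) =
      (P.toBlocks₁₁ *ᵥ w + u • q) ⊕ᵥ ![q ⬝ᵥ w + p * u] := fun w u => by
    have hq : ∀ i, P (.inr 0) (.inl i) = q i := fun i => congrFun₂ hsymm (.inl i) (.inr 0)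
    ext (i | i)
    · simp [mulVec, dotProduct, toBlocks₁₁, q, mul_comm]
    · simp [mulVec, dotProduct, hq, p, Subsingleton.elim i 0]
  have hsquare : ∀ y w x u, (y ⊕ᵥ ![x]) ⬝ᵥ P *ᵥ (w ⊕ᵥ ![u]) =
      y ⬝ᵥ Q *ᵥ w + p * (x - k ⬝ᵥ y) * (u - k ⬝ᵥ w) := fun y w x u => by
    simp only [hmul, sumElim_dotProduct_sumElim, Q, k, sub_mulVec, smul_mulVec, vecMulVec_mulVec,
      dotProduct_add, dotProduct_sub, dotProduct_smul, smul_eq_mul, neg_dotProduct, smul_dotProduct,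
      op_smul_eq_smul, dotProduct_comm y q, cons_dotProduct_cons,
      dotProduct_of_isEmpty]
    field_simp
    ring
  refine ⟨p, k, Q, hp, .of_dotProduct_mulVec_pos ?_ fun y hy => ?_, hsquare⟩
  · exact (hP.isHermitian.submatrix Sum.inl).sub
      ((posSemidef_vecMulVec_self_star q).isHermitian.smul (.all p⁻¹))
  · have hne : (y ⊕ᵥ ![k ⬝ᵥ y]) ≠ 0 := fun h => hy (funext fun i => congrFun h (.inl i))
    simpa [hsquare] using hP.dotProduct_mulVec_pos hne

theorem fderiv_fderiv_eq_dotProduct_hessianAt_mulVec {n : ℕ} (V : (Fin n → ℝ) → ℝ)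
    (x v w : Fin n → ℝ) : fderiv ℝ (fderiv ℝ V) x v w = v ⬝ᵥ hessianAt V x *ᵥ w := by
  conv_lhs => rw [pi_eq_sum_univ' v, pi_eq_sum_univ' w]
  simp only [map_sum, map_smul, _root_.sum_apply, _root_.smul_apply, smul_eq_mul, hessianAt,
    of_apply, iteratedFDeriv_two_apply, dotProduct, mulVec, Finset.mul_sum]
  rw [Finset.sum_comm]
  refine Finset.sum_congr rfl fun i _ => Finset.sum_congr rfl fun j _ => ?_
  simp
  ring

end LyapunovEquation

section LocalData

theorem Hurwitz.exists_completeSquare_neg {ι : Type*} [Fintype ι] [DecidableEq ι]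
    {M : Matrix (ι ⊕ Fin 1) (ι ⊕ Fin 1) ℝ} (hM : Hurwitz M) :
    ∃ (p : ℝ) (k : ι → ℝ) (Q : Matrix ι ι ℝ), 0 < p ∧ Q.PosDef ∧ ∀ y x w u,
      (y ≠ 0 ∨ x ≠ 0) → M *ᵥ (y ⊕ᵥ ![x]) = w ⊕ᵥ ![u] →
        y ⬝ᵥ Q *ᵥ w + p * (x - k ⬝ᵥ y) * (u - k ⬝ᵥ w) < 0 := by
  obtain ⟨P, hP, hPM⟩ := hM.exists_posDef_lyapunov
  obtain ⟨p, k, Q, hp, hQ, hsquare⟩ := exists_completeSquare hP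
  refine ⟨p, k, Q, hp, hQ, fun y x w u hyx hM => ?_⟩
  rw [← hsquare, ← hM]
  refine (posDef_neg_lyapunov_iff (by simpa [IsHermitian] using hP.isHermitian)).1 hPM _ fun h => ?_
  exact hyx.elim (fun hy => hy (funext fun i => congrFun h (.inl i)))
    fun hx => hx (congrFun h (.inr 0))

theorem closedLoop_mulVec {ι : Type*} [Fintype ι] (H : Matrix ι ι ℝ) (b F : ι → ℝ) (c G : ℝ)
    (K : Matrix (Fin 1) (ι ⊕ Fin 1) ℝ) (y : ι → ℝ) (x : ℝ) :
    (fromBlocks H (of fun i _ => b i) (of fun _ j => F j) (of fun _ _ => c) +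
        (of fun i _ => Sum.elim (fun _ => 0) (fun _ => G) i : Matrix (ι ⊕ Fin 1) (Fin 1) ℝ) * K) *ᵥ
          (y ⊕ᵥ ![x]) =
      (H *ᵥ y + x • b) ⊕ᵥ
        ![F ⬝ᵥ y + c * x + G * ((fun i => K 0 (.inl i)) ⬝ᵥ y + K 0 (.inr 0) * x)] := by
  ext (i | i)
  · simp [mulVec, dotProduct, mul_comm x, Matrix.mul_apply]
  · simp [mulVec, dotProduct, Matrix.mul_apply, Finset.mul_sum, add_mul, mul_add,
      Finset.sum_add_distrib, mul_assoc]

end LocalData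

theorem stmt4_general {ny : ℕ}
    (h₁ h₂ : (Fin ny → ℝ) → (Fin ny → ℝ)) (f g : ((Fin ny → ℝ) × ℝ) → ℝ)
    (hh₁ : ContDiff ℝ 1 h₁) (hh₂ : ContDiff ℝ 1 h₂) (hf : ContDiff ℝ 1 f) (hg : ContDiff ℝ 1 g)
    (hh₁0 : h₁ 0 = 0) (hf0 : f 0 = 0) (hgne : ∀ z, z ≠ 0 → g z ≠ 0)
    (H₁ : Matrix (Fin ny) (Fin ny) ℝ) (F₁ : Fin ny → ℝ) (F₂ : ℝ)
    (hH₁ : ∀ v, fderiv ℝ h₁ 0 v = H₁ *ᵥ v)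
    (hF : ∀ v : (Fin ny → ℝ) × ℝ, fderiv ℝ f 0 v = F₁ ⬝ᵥ v.1 + F₂ * v.2)
    (A : Matrix (Fin ny ⊕ Fin 1) (Fin ny ⊕ Fin 1) ℝ)
    (B : Matrix (Fin ny ⊕ Fin 1) (Fin 1) ℝ)
    (hA : A = fromBlocks H₁ (of fun i _ => h₂ 0 i) (of fun _ j => F₁ j) (of fun _ _ => F₂))
    (hB : B = of fun i _ => Sum.elim (fun _ => 0) (fun _ => g 0) i)
    (hass : ∀ (Ky : Fin ny → ℝ) (Py : Matrix (Fin ny) (Fin ny) ℝ), Py.PosDef →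
      (-(Py * (H₁ + vecMulVec (h₂ 0) Ky) + (H₁ + vecMulVec (h₂ 0) Ky)ᵀ * Py)).PosDef →
      ∃ Vy : (Fin ny → ℝ) → ℝ, ContDiff ℝ 2 Vy ∧ IsControlLyapunov Vy h₁ h₂ ∧
        (1 / 2 : ℝ) • hessianAt Vy 0 = Py)
    (K : Matrix (Fin 1) (Fin ny ⊕ Fin 1) ℝ) (hHurwitz : Hurwitz (A + B * K)) :
    ∃ α₀ : ((Fin ny → ℝ) × ℝ) → ℝ, ContDiff ℝ (⊤ : ℕ∞) α₀ ∧ α₀ 0 = 0 ∧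
      (∀ v : (Fin ny → ℝ) × ℝ, fderiv ℝ α₀ 0 v =
        (∑ i, K 0 (.inl i) * v.1 i) + K 0 (.inr 0) * v.2) ∧
      IsGAS fun z : (Fin ny → ℝ) × ℝ => (h₁ z.1 + z.2 • h₂ z.1, f z + g z * α₀ z) := by
  obtain ⟨p, k, Py, hp, hPy, hneg⟩ := hHurwitz.exists_completeSquare_neg
  have hlinear := fun y x hyx => hneg y x _ _ hyx (by rw [hA, hB, closedLoop_mulVec])
  obtain ⟨Vy, hVy, hclf, rfl⟩ := hass k Py hPy <|
    (posDef_neg_lyapunov_iff (by simpa [IsHermitian] using hPy.isHermitian)).2 fun y hy => by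
      simpa [add_mulVec, vecMulVec_mulVec] using hlinear y (k ⬝ᵥ y) (.inl hy)
  let κ : (Fin ny → ℝ) →L[ℝ] ℝ := (dotProductBilin ℝ ℝ k).toContinuousLinearMap
  let κ₀ : (Fin ny → ℝ) × ℝ →L[ℝ] ℝ :=
    (dotProductBilin ℝ ℝ fun i => K 0 (.inl i)).toContinuousLinearMap.coprod
      (K 0 (.inr 0) • .id ℝ ℝ)
  have hκ : ∀ y, κ y = k ⬝ᵥ y := fun y => rfl
  have hκ₀ : ∀ v, κ₀ v = (fun i => K 0 (.inl i)) ⬝ᵥ v.1 + K 0 (.inr 0) * v.2 := fun v => rfl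
  obtain ⟨α₀, hα₀, hα₀κ, hgas⟩ := exists_backstepping_feedback hh₁ hh₂ hf hg hh₁0 hf0 hgne hVy hclf
    hp κ κ₀ fun v hv => by
      have hv' := hlinear v.1 v.2 (by contrapose! hv; exact Prod.ext hv.1 hv.2)
      rw [smul_mulVec, dotProduct_smul, smul_eq_mul] at hv'
      rw [fderiv_fderiv_eq_dotProduct_hessianAt_mulVec, hH₁, hF, hκ, hκ, hκ₀]
      linear_combination 2 * hv'
  exact ⟨α₀, hα₀, by simp [hα₀κ.eq_of_nhds], fun v => by simp [hα₀κ.fderiv_eq, hκ₀, dotProduct],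
    hgas⟩

/-- backstepping case. For the strict-feedback system
`y' = h₁ y + x • h₂ y`, `x' = f (y,x) + g (y,x) u` with `g` never vanishing, if the
`y`-subsystem satisfies the local-behavior assumption (Assumption 2), then for every row
vector `K` making `A + BK` Hurwitz there is a smooth feedback `α₀` with `α₀ 0 = 0` and
`Dα₀(0) = K` rendering the origin of the closed loop globally asymptotically stable. -/
theorem stmt4 {ny : ℕ}
    (h₁ : (Fin ny → ℝ) → (Fin ny → ℝ)) (h₂ : (Fin ny → ℝ) → (Fin ny → ℝ))
    (f g : ((Fin ny → ℝ) × ℝ) → ℝ)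
    (hh₁ : ContDiff ℝ (⊤ : ℕ∞) h₁) (hh₂ : ContDiff ℝ (⊤ : ℕ∞) h₂)
    (hf : ContDiff ℝ (⊤ : ℕ∞) f) (hg : ContDiff ℝ (⊤ : ℕ∞) g)
    (hh₁0 : h₁ 0 = 0) (hf0 : f 0 = 0) (hgne : ∀ z, g z ≠ 0)
    -- first-order approximation data
    (H₁ : Matrix (Fin ny) (Fin ny) ℝ) (F₁ : Fin ny → ℝ) (F₂ : ℝ)
    (hH₁ : ∀ v, fderiv ℝ h₁ 0 v = H₁.mulVec v)
    (hF : ∀ v : (Fin ny → ℝ) × ℝ, fderiv ℝ f 0 v = F₁ ⬝ᵥ v.1 + F₂ * v.2)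
    (A : Matrix (Fin ny ⊕ Fin 1) (Fin ny ⊕ Fin 1) ℝ)
    (B : Matrix (Fin ny ⊕ Fin 1) (Fin 1) ℝ)
    (hA : A = Matrix.fromBlocks H₁ (Matrix.of fun i _ => h₂ 0 i)
        (Matrix.of fun _ j => F₁ j) (Matrix.of fun _ _ => F₂))
    (hB : B = Matrix.of fun i (_ : Fin 1) => Sum.elim (fun _ => (0:ℝ)) (fun _ => g 0) i)
    -- Assumption 2: prescribed local behavior is solvable for the `y`-subsystem
    (hass : ∀ (Ky : Fin ny → ℝ) (Py : Matrix (Fin ny) (Fin ny) ℝ), Py.PosDef →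
      (-(Py * (H₁ + Matrix.vecMulVec (h₂ 0) Ky)
          + (H₁ + Matrix.vecMulVec (h₂ 0) Ky)ᵀ * Py)).PosDef →
      ∃ Vy : (Fin ny → ℝ) → ℝ, ContDiff ℝ (⊤ : ℕ∞) Vy ∧ (∀ y, 0 ≤ Vy y) ∧
        IsProper Vy ∧ IsPosDefFn Vy ∧ ((1:ℝ)/2) • hessianAt Vy 0 = Py ∧
        ∀ y : Fin ny → ℝ, y ≠ 0 →
          fderiv ℝ Vy y (h₂ y) = 0 → fderiv ℝ Vy y (h₁ y) < 0)
    (K : Matrix (Fin 1) (Fin ny ⊕ Fin 1) ℝ)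
    (hHurwitz : Hurwitz (A + B * K)) :
    ∃ α₀ : ((Fin ny → ℝ) × ℝ) → ℝ, ContDiff ℝ (⊤ : ℕ∞) α₀ ∧ α₀ 0 = 0 ∧
      (∀ v : (Fin ny → ℝ) × ℝ, fderiv ℝ α₀ 0 v
        = (∑ i, K 0 (Sum.inl i) * v.1 i) + K 0 (Sum.inr 0) * v.2) ∧
      IsGAS (fun z : (Fin ny → ℝ) × ℝ =>
        (h₁ z.1 + z.2 • h₂ z.1, f z + g z * α₀ z)) := by
  refine stmt4_general h₁ h₂ f g (hh₁.of_le ENat.LEInfty.out) (hh₂.of_le ENat.LEInfty.out)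
    (hf.of_le ENat.LEInfty.out) (hg.of_le ENat.LEInfty.out) hh₁0 hf0 (fun z _ => hgne z) H₁ F₁ F₂
    hH₁ hF A B hA hB (fun Ky Py hPy hlyap => ?_) K hHurwitz
  obtain ⟨Vy, hVy, -, hproper, hpos, hhess, hclf⟩ := hass Ky Py hPy hlyap
  exact ⟨Vy, hVy.of_le ENat.LEInfty.out, ⟨hproper, hpos, hclf⟩, hhess⟩
end
end

section
/- Let a: ℝ^n → ℝ^n and b: ℝ^n → ℝ^{n×p} be locally Lipschitz with a(0) = 0, let V: ℝ^n → ℝ≥0 be a C¹ proper positive definite function, let K ∈ ℝ^{p×n}, let α∞: ℝ^n → ℝ^p be locally Lipschitz, and let r₀ > 0. Assume (i) ∇V(χ)·(a(χ) + b(χ)α∞(χ)) < 0 for all χ ≠ 0, and (ii) ∇V(χ)·(a(χ) + b(χ)Kχ) < 0 for all χ with 0 < V(χ) ≤ r₀. Let ρ: ℝ≥0 → [0,1] be any locally Lipschitz function with ρ(s) = 0 for s ≤ r₀/2 and ρ(s) = 1 for s ≥ r₀. Then the map α₀(χ) := ρ(V(χ))α∞(χ) + (1 − ρ(V(χ)))Kχ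 is locally Lipschitz, coincides with χ ↦ Kχ on a neighborhood of 0 (hence is differentiable at 0 with α₀(0) = 0 and Dα₀(0) = K), and satisfies ∇V(χ)·(a(χ) + b(χ)α₀(χ)) < 0 for all χ ≠ 0. -/
open Matrix Filter Topology Asymptotics

noncomputable section

/-! At a fixed state `x`, the control values `u` for which `V` decreases along `a x + b x u` form a
convex set (an open half-space, unless it is empty or everything), so a convex combination of two
decreasing feedbacks is decreasing. The local law is only known to be decreasing on the sublevel
set `V ≤ r₀`, and it carries nonzero weight only there. -/

theorem locallyLipschitz_smul {𝕜 X F : Type*} [RCLike 𝕜] [PseudoEMetricSpace X]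
    [NormedAddCommGroup F] [NormedSpace 𝕜 F] {r : X → 𝕜} {f : X → F}
    (hr : LocallyLipschitz r) (hf : LocallyLipschitz f) :
    LocallyLipschitz fun x => r x • f x :=
  (contDiff_smul.locallyLipschitz (𝕂 := 𝕜)).comp (hr.prodMk hf)

theorem convex_setOf_map_add_lt {𝕜 F G : Type*} [Field 𝕜] [LinearOrder 𝕜]
    [IsStrictOrderedRing 𝕜] [AddCommGroup F] [Module 𝕜 F] [AddCommGroup G] [Module 𝕜 G]
    (L : G →ₗ[𝕜] 𝕜) (c : G) (B : F →ₗ[𝕜] G) (t : 𝕜) :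
    Convex 𝕜 {u | L (c + B u) < t} :=
  ((convex_halfSpace_lt L.isLinear t).translate_preimage_right c).linear_preimage B

/-- The feedback `ρ(V) α + (1 - ρ(V)) κ` passing from the local law `κ` to the global law `α` as the
Lyapunov level `V` grows. As `ρ` is defined on `[0, ∞)`, a negative level counts as `0`. -/
def blendedFeedback {X F : Type*} [AddCommGroup F] [Module ℝ F] (ρ : NNReal → ℝ) (V : X → ℝ)
    (α κ : X → F) (x : X) : F :=
  ρ (V x).toNNReal • α x + (1 - ρ (V x).toNNReal) • κ x

section BlendedFeedback

variable {X F : Type*} {ρ : NNReal → ℝ} {V : X → ℝ} {α κ : X → F}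

theorem locallyLipschitz_blendedFeedback [PseudoEMetricSpace X] [NormedAddCommGroup F]
    [NormedSpace ℝ F] (hρ : LocallyLipschitz ρ) (hV : LocallyLipschitz V)
    (hα : LocallyLipschitz α) (hκ : LocallyLipschitz κ) :
    LocallyLipschitz (blendedFeedback ρ V α κ) := by
  have hρV : LocallyLipschitz fun x => ρ (V x).toNNReal :=
    hρ.comp (Real.lipschitzWith_toNNReal.locallyLipschitz.comp hV)
  exact (locallyLipschitz_smul hρV hα).add
    (locallyLipschitz_smul ((LocallyLipschitz.const 1).sub hρV) hκ)

variable [AddCommGroup F] [Module ℝ F]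

theorem blendedFeedback_eventuallyEq [TopologicalSpace X] {x₀ : X} (hV : ContinuousAt V x₀)
    (hρ : ∀ᶠ s in 𝓝 (V x₀).toNNReal, ρ s = 0) :
    blendedFeedback ρ V α κ =ᶠ[𝓝 x₀] κ := by
  filter_upwards [(continuous_real_toNNReal.continuousAt.comp hV).eventually hρ] with x hx
  simp only [Function.comp_apply] at hx
  simp only [blendedFeedback, hx, zero_smul, sub_zero, one_smul, zero_add]

theorem blendedFeedback_mem_of_convex {s : Set F} {x : X} (hs : Convex ℝ s)
    (hρ : ρ (V x).toNNReal ∈ Set.Icc 0 1) (hα : α x ∈ s)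
    (hκ : ρ (V x).toNNReal ≠ 1 → κ x ∈ s) :
    blendedFeedback ρ V α κ x ∈ s := by
  by_cases h : ρ (V x).toNNReal = 1
  · simpa only [blendedFeedback, h, one_smul, sub_self, zero_smul, add_zero] using hα
  · exact hs hα (hκ h) hρ.1 (sub_nonneg.2 hρ.2) (add_sub_cancel _ _)

end BlendedFeedback

theorem stmt8_general {E F : Type*} [NormedAddCommGroup E] [NormedSpace ℝ E]
    [NormedAddCommGroup F] [NormedSpace ℝ F] (a : E → E) (b : E → F →ₗ[ℝ] E) {V : E → ℝ}
    (hV : LocallyLipschitz V) (hVpos : IsPosDefFn V) (K : E →L[ℝ] F) {α : E → F}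
    (hα : LocallyLipschitz α) {r₁ r₀ : ℝ} (hr₁ : 0 < r₁)
    (hglob : ∀ χ, χ ≠ 0 → fderiv ℝ V χ (a χ + b χ (α χ)) < 0)
    (hloc : ∀ χ, 0 < V χ → V χ ≤ r₀ → fderiv ℝ V χ (a χ + b χ (K χ)) < 0)
    {ρ : NNReal → ℝ} (hρ_lip : LocallyLipschitz ρ) (hρ_range : ∀ s, ρ s ∈ Set.Icc (0 : ℝ) 1)
    (hρ0 : ∀ s : NNReal, (s : ℝ) ≤ r₁ → ρ s = 0)
    (hρ1 : ∀ s : NNReal, r₀ ≤ (s : ℝ) → ρ s = 1) :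
    LocallyLipschitz (blendedFeedback ρ V α K) ∧
    (∀ᶠ χ in 𝓝 0, blendedFeedback ρ V α K χ = K χ) ∧
    blendedFeedback ρ V α K 0 = 0 ∧ HasFDerivAt (blendedFeedback ρ V α K) K 0 ∧
    (∀ χ, χ ≠ 0 → fderiv ℝ V χ (a χ + b χ (blendedFeedback ρ V α K χ)) < 0) := by
  have hρ_zero : ∀ᶠ s in 𝓝 (V 0).toNNReal, ρ s = 0 := by
    rw [hVpos.1, Real.toNNReal_zero]
    exact ((NNReal.continuous_coe.tendsto 0).eventually_le_const hr₁).mono hρ0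
  have h_eq : blendedFeedback ρ V α K =ᶠ[𝓝 0] K :=
    blendedFeedback_eventuallyEq hV.continuous.continuousAt hρ_zero
  refine ⟨locallyLipschitz_blendedFeedback hρ_lip hV hα K.lipschitz.locallyLipschitz, h_eq,
    h_eq.self_of_nhds.trans (map_zero K), K.hasFDerivAt.congr_of_eventuallyEq h_eq, fun χ hχ => ?_⟩
  have h_level : ρ (V χ).toNNReal ≠ 1 → V χ ≤ r₀ := fun hne => by
    contrapose! hne
    exact hρ1 _ (hne.le.trans (Real.le_coe_toNNReal _))
  exact blendedFeedback_mem_of_convex (convex_setOf_map_add_lt (fderiv ℝ V χ) (a χ) (b χ) 0)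
    (hρ_range _) (hglob χ hχ) fun hne => hloc χ (hVpos.2 χ hχ) (h_level hne)

/-- Blending a global feedback `αoo` with the local linear feedback
`Kχ` through a locally Lipschitz saturation `ρ : ℝ≥0 → [0,1]` of the Lyapunov level
yields a locally Lipschitz feedback that equals `Kχ` near the origin (in particular it
is differentiable at `0` with value `0` and derivative `K`) and makes `V` strictly
decrease everywhere away from the origin. -/
theorem stmt8 {n p : ℕ}
    (a : (Fin n → ℝ) → (Fin n → ℝ)) (b : (Fin n → ℝ) → Fin n → Fin p → ℝ)
    (ha_lip : LocallyLipschitz a) (hb_lip : LocallyLipschitz b) (ha0 : a 0 = 0)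
    (V : (Fin n → ℝ) → ℝ)
    (hV : ContDiff ℝ 1 V) (hVnonneg : ∀ χ, 0 ≤ V χ)
    (hVproper : IsProper V) (hVpos : IsPosDefFn V)
    (K : Matrix (Fin p) (Fin n) ℝ)
    (αoo : (Fin n → ℝ) → (Fin p → ℝ)) (hαoo : LocallyLipschitz αoo)
    (r₀ : ℝ) (hr₀ : 0 < r₀)
    (hglob : ∀ χ : Fin n → ℝ, χ ≠ 0 →
      fderiv ℝ V χ (a χ + (Matrix.of (b χ)).mulVec (αoo χ)) < 0)
    (hloc : ∀ χ : Fin n → ℝ, 0 < V χ → V χ ≤ r₀ →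
      fderiv ℝ V χ (a χ + (Matrix.of (b χ)).mulVec (K.mulVec χ)) < 0)
    (ρ : NNReal → ℝ) (hρ_lip : LocallyLipschitz ρ)
    (hρ_range : ∀ s, ρ s ∈ Set.Icc (0:ℝ) 1)
    (hρ0 : ∀ s : NNReal, (s:ℝ) ≤ r₀ / 2 → ρ s = 0)
    (hρ1 : ∀ s : NNReal, r₀ ≤ (s:ℝ) → ρ s = 1)
    (α₀ : (Fin n → ℝ) → (Fin p → ℝ))
    (hα₀def : α₀ = fun χ =>
      ρ (V χ).toNNReal • αoo χ + (1 - ρ (V χ).toNNReal) • K.mulVec χ) :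
    LocallyLipschitz α₀ ∧
    (∀ᶠ χ in nhds (0 : Fin n → ℝ), α₀ χ = K.mulVec χ) ∧
    α₀ 0 = 0 ∧ DifferentiableAt ℝ α₀ 0 ∧ (∀ v, fderiv ℝ α₀ 0 v = K.mulVec v) ∧
    (∀ χ : Fin n → ℝ, χ ≠ 0 →
      fderiv ℝ V χ (a χ + (Matrix.of (b χ)).mulVec (α₀ χ)) < 0) := by
  subst hα₀def
  obtain ⟨h_lip, h_eq, h_zero, h_deriv, h_neg⟩ := stmt8_general a (fun χ => (of (b χ)).mulVecLin)
    hV.locallyLipschitz hVpos K.mulVecLin.toContinuousLinearMap hαoo (half_pos hr₀) hglob hloc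
    hρ_lip hρ_range hρ0 hρ1
  exact ⟨h_lip, h_eq, h_zero, h_deriv.differentiableAt, DFunLike.congr_fun h_deriv.fderiv, h_neg⟩
end
end

section
/- Let C ⊂ ℝ^n be a compact set with 0 ∉ C, let V: ℝ^n → ℝ be C¹, let a: ℝ^n → ℝ^n and b: ℝ^n → ℝ^{n×p} be continuous, and let R ∈ ℝ^{p×p} be symmetric positive definite. If for every χ ∈ C, ∇V(χ)ᵀb(χ) = 0 implies ∇V(χ)·a(χ) < 0, then there exists ℓ ≥ 0 such that for all χ ∈ C, ∇V(χ)·a(χ) − (ℓ/4)·(∇V(χ)ᵀb(χ)) R⁻¹ (∇V(χ)ᵀb(χ))ᵀ < 0. -/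
open Matrix Filter Topology Asymptotics

noncomputable section

/-!
Where the drift `f` is negative, the damping term `l * g` with `g ≥ 0` only helps. The remaining
points `{x ∈ C | 0 ≤ f x}` form a compact set on which `g` does not vanish, so `f / g` is
continuous there and hence bounded; any larger gain `l` makes `l * g` dominate `f`.
-/

section Gain

variable {X : Type*} [TopologicalSpace X] {C : Set X} {f g : X → ℝ}

theorem exists_nonneg_forall_lt_mul (hC : IsCompact C) (hf : ContinuousOn f C)
    (hg : ContinuousOn g C) (hg_nonneg : ∀ x ∈ C, 0 ≤ g x)
    (hf_neg : ∀ x ∈ C, g x = 0 → f x < 0) :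
    ∃ l : ℝ, 0 ≤ l ∧ ∀ x ∈ C, f x < l * g x := by
  set K := C ∩ f ⁻¹' Set.Ici 0
  have hK : IsCompact K := hf.upperSemicontinuousOn.isCompact_inter_preimage_Ici hC 0
  have hKC : K ⊆ C := Set.inter_subset_left
  have hg_pos : ∀ x ∈ K, 0 < g x := fun x hx =>
    (hg_nonneg x hx.1).lt_of_ne' fun hgx => (hf_neg x hx.1 hgx).not_ge hx.2
  have hfg : ContinuousOn (fun x => f x / g x) K :=
    (hf.mono hKC).div (hg.mono hKC) fun x hx => (hg_pos x hx).ne'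
  obtain ⟨B, hB⟩ := hK.bddAbove_image hfg
  have hl : 0 ≤ max B 0 + 1 := by positivity
  refine ⟨max B 0 + 1, hl, fun x hx => ?_⟩
  rcases lt_or_ge (f x) 0 with hfx | hfx
  · exact hfx.trans_le (mul_nonneg hl (hg_nonneg x hx))
  · rw [← div_lt_iff₀ (hg_pos x ⟨hx, hfx⟩)]
    calc f x / g x ≤ B := hB (Set.mem_image_of_mem _ ⟨hx, hfx⟩)
      _ ≤ max B 0 := le_max_left B 0
      _ < max B 0 + 1 := lt_add_one _

theorem exists_nonneg_forall_lt_mul_dotProduct_mulVec {ι : Type*} [Fintype ι] {w : X → ι → ℝ}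
    {M : Matrix ι ι ℝ} (hM : M.PosDef) (hC : IsCompact C) (hf : ContinuousOn f C)
    (hw : ContinuousOn w C) (hf_neg : ∀ x ∈ C, w x = 0 → f x < 0) :
    ∃ l : ℝ, 0 ≤ l ∧ ∀ x ∈ C, f x < l * (w x ⬝ᵥ M *ᵥ w x) := by
  have hquad : Continuous fun v : ι → ℝ => v ⬝ᵥ M *ᵥ v :=
    continuous_id.dotProduct (continuous_const.matrix_mulVec continuous_id)
  refine exists_nonneg_forall_lt_mul hC hf (hquad.comp_continuousOn hw)
    (fun x _ => hM.posSemidef.dotProduct_mulVec_nonneg (w x)) fun x hx hquad_zero => ?_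
  refine hf_neg x hx (by_contra fun hwx => ?_)
  exact (hM.dotProduct_mulVec_pos hwx).ne' hquad_zero

end Gain

theorem stmt9_general {E ι : Type*} [NormedAddCommGroup E] [NormedSpace ℝ E] [Fintype ι]
    [DecidableEq ι] {C U : Set E} (hC : IsCompact C) (hU : IsOpen U) (hCU : C ⊆ U)
    {V : E → ℝ} (hV : ContDiffOn ℝ 1 V U) {a : E → E} {b : ι → E → E}
    (ha : ContinuousOn a C) (hb : ∀ i, ContinuousOn (b i) C)
    {R : Matrix ι ι ℝ} (hR : R.PosDef)
    (hArtstein : ∀ χ ∈ C, (∀ i, fderiv ℝ V χ (b i χ) = 0) → fderiv ℝ V χ (a χ) < 0) :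
    ∃ ℓ : ℝ, 0 ≤ ℓ ∧ ∀ χ ∈ C,
      fderiv ℝ V χ (a χ)
        - ℓ / 4 * ((fun i => fderiv ℝ V χ (b i χ)) ⬝ᵥ
            R⁻¹ *ᵥ (fun i => fderiv ℝ V χ (b i χ))) < 0 := by
  have hdV : ContinuousOn (fderiv ℝ V) C :=
    (hV.continuousOn_fderiv_of_isOpen hU le_rfl).mono hCU
  have hLb : ContinuousOn (fun χ i => fderiv ℝ V χ (b i χ)) C :=
    continuousOn_pi.mpr fun i => hdV.clm_apply (hb i)
  obtain ⟨l, hl, hlt⟩ := exists_nonneg_forall_lt_mul_dotProduct_mulVec hR.inv hC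
    (hdV.clm_apply ha) hLb fun χ hχ hzero => hArtstein χ hχ (congrFun hzero)
  refine ⟨4 * l, by positivity, fun χ hχ => ?_⟩
  rw [mul_div_cancel_left₀ l four_ne_zero]
  exact sub_neg.mpr (hlt χ hχ)

/-- On a compact set `C` not containing the origin, if the Artstein
condition holds at every point of `C`, then some gain `ℓ ≥ 0` makes the damped
derivative `L_aV − (ℓ/4) L_bV R⁻¹ (L_bV)ᵀ` negative on all of `C`. -/
theorem stmt9 {n p : ℕ}
    (C : Set (Fin n → ℝ)) (hC : IsCompact C) (h0C : (0 : Fin n → ℝ) ∉ C)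
    (V : (Fin n → ℝ) → ℝ) (hV : ContDiff ℝ 1 V)
    (a : (Fin n → ℝ) → (Fin n → ℝ)) (b : (Fin n → ℝ) → Fin n → Fin p → ℝ)
    (ha : Continuous a) (hb : Continuous b)
    (R : Matrix (Fin p) (Fin p) ℝ) (hR : R.PosDef)
    (hArtstein : ∀ χ ∈ C,
      (∀ i, fderiv ℝ V χ (fun k => b χ k i) = 0) → fderiv ℝ V χ (a χ) < 0) :
    ∃ ℓ : ℝ, 0 ≤ ℓ ∧ ∀ χ ∈ C,
      fderiv ℝ V χ (a χ)
        - ℓ / 4 * ((fun i => fderiv ℝ V χ (fun k => b χ k i)) ⬝ᵥ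
            R⁻¹.mulVec (fun i => fderiv ℝ V χ (fun k => b χ k i))) < 0 :=
  stmt9_general hC isOpen_univ (Set.subset_univ C) hV.contDiffOn ha.continuousOn
    (fun i => Continuous.continuousOn (by fun_prop)) hR hArtstein
end
end

section
/- Let V: ℝ^n → ℝ≥0 be a C² proper positive definite function with ∇V(0) = 0 and P := (1/2)·H(V)(0), let a: ℝ^n → ℝ^n be C¹ with a(0) = 0 and A := Da(0), let b: ℝ^n → ℝ^{n×p} be continuous with B := b(0), and let R ∈ ℝ^{p×p} be symmetric positive definite. If AᵀP + PA − PBR⁻¹BᵀP = −Q for some positive definite matrix Q, then there exists r₀ > 0 such that for all χ with 0 < V(χ) ≤ r₀, −∇V(χ)·a(χ) + (1/4)·(∇V(χ)ᵀb(χ)) R⁻¹ (∇V(χ)ᵀb(χ))ᵀ > 0. -/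
open Matrix Filter Topology Asymptotics

noncomputable section

/-!
Near the origin `∇V(χ) = 2Pχ + o(χ)`, `a(χ) = Aχ + o(χ)` and `b(χ) = B + o(1)`, so
`−L_aV + ¼ L_bV R⁻¹ (L_bV)ᵀ` equals its quadratic part `−χᵀ(AᵀP + PA − PBR⁻¹BᵀP)χ = χᵀQχ` up to
`o(‖χ‖²)`. A positive definite quadratic part dominates the error, which gives positivity on a
punctured neighbourhood of `0`, and small sublevel sets of the proper function `V` lie in any
neighbourhood of `0`.
-/

section Asymptotics

theorem isLittleO_bilinear_sub {𝕜 α E F G : Type*} [NontriviallyNormedField 𝕜]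
    [NormedAddCommGroup E] [NormedSpace 𝕜 E] [NormedAddCommGroup F] [NormedSpace 𝕜 F]
    [NormedAddCommGroup G] [NormedSpace 𝕜 G] (L : E →L[𝕜] F →L[𝕜] G) {l : Filter α}
    {f f₀ : α → E} {g g₀ : α → F} {u v : α → ℝ}
    (hf : (fun x => f x - f₀ x) =o[l] u) (hf₀ : f₀ =O[l] u)
    (hg : (fun x => g x - g₀ x) =o[l] v) (hg₀ : g₀ =O[l] v) :
    (fun x => L (f x) (g x) - L (f₀ x) (g₀ x)) =o[l] fun x => u x * v x := by
  have hgv : g =O[l] v := by simpa using hg.isBigO.add hg₀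
  have hleft : (fun x => L (f x - f₀ x) (g x)) =o[l] fun x => u x * v x :=
    L.isBoundedBilinearMap.isBigO_comp.trans_isLittleO (hf.norm_left.mul_isBigO hgv.norm_left)
  have hright : (fun x => L (f₀ x) (g x - g₀ x)) =o[l] fun x => u x * v x :=
    L.isBoundedBilinearMap.isBigO_comp.trans_isLittleO (hf₀.norm_left.mul_isLittleO hg.norm_left)
  refine (hleft.add hright).congr_left fun x => ?_
  simp only [map_sub, _root_.sub_apply, sub_add_sub_cancel]

variable {E : Type*} [NormedAddCommGroup E] [NormedSpace ℝ E] [ProperSpace E]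

theorem exists_pos_mul_norm_sq_le {q : E → ℝ} (hq : Continuous q)
    (hsmul : ∀ (t : ℝ) (x : E), q (t • x) = t ^ 2 * q x) (hpos : ∀ x ≠ 0, 0 < q x) :
    ∃ c > 0, ∀ x, c * ‖x‖ ^ 2 ≤ q x := by
  obtain ⟨c, hc, hle⟩ := (isCompact_sphere (0 : E) 1).exists_forall_le' hq.continuousOn
    fun x hx => hpos x (ne_zero_of_mem_unit_sphere ⟨x, hx⟩)
  refine ⟨c, hc, fun x => ?_⟩
  rcases eq_or_ne x 0 with rfl | hx
  · simpa using (hsmul 0 0).ge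
  · have hunit : ‖x‖⁻¹ • x ∈ Metric.sphere (0 : E) 1 := by simp [norm_smul, hx]
    calc c * ‖x‖ ^ 2 ≤ q (‖x‖⁻¹ • x) * ‖x‖ ^ 2 := by gcongr; exact hle _ hunit
      _ = q x := by rw [hsmul]; field_simp [norm_ne_zero_iff.mpr hx]

theorem eventually_pos_of_isLittleO_sub {f q : E → ℝ} (hq : Continuous q)
    (hsmul : ∀ (t : ℝ) (x : E), q (t • x) = t ^ 2 * q x) (hpos : ∀ x ≠ 0, 0 < q x)
    (hf : (fun x => f x - q x) =o[𝓝 0] fun x => ‖x‖ ^ 2) :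
    ∀ᶠ x in 𝓝[≠] 0, 0 < f x := by
  obtain ⟨c, hc, hle⟩ := exists_pos_mul_norm_sq_le hq hsmul hpos
  filter_upwards [nhdsWithin_le_nhds (hf.bound (half_pos hc)), self_mem_nhdsWithin] with x herr hx
  have hnorm : 0 < c / 2 * ‖x‖ ^ 2 := by have := norm_pos_iff.mpr hx; positivity
  have hlower : -(c / 2 * ‖x‖ ^ 2) ≤ f x - q x := by
    rw [norm_pow, norm_norm] at herr
    exact (abs_le.mp herr).1
  linarith [hle x]

end Asymptotics

theorem IsPosDefFn.exists_sublevel_subset {E : Type*} [NormedAddCommGroup E] [ProperSpace E]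
    {V : E → ℝ} (hpos : IsPosDefFn V) (hproper : IsProper V) (hV : Continuous V)
    {U : Set E} (hU : U ∈ 𝓝 0) : ∃ r > 0, ∀ x, V x ≤ r → x ∈ U := by
  obtain ⟨K, hK, hlarge⟩ : ∃ K, IsCompact K ∧ ∀ x ∉ K, 1 < V x := by
    have hev := hproper.eventually_gt_atTop 1
    rw [Metric.cobounded_eq_cocompact] at hev
    obtain ⟨K, hK, hsub⟩ := mem_cocompact.mp hev
    exact ⟨K, hK, fun x hx => hsub hx⟩
  obtain ⟨m, hm, hle⟩ := (hK.diff isOpen_interior).exists_forall_le' hV.continuousOn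
    fun x hx => hpos.2 x fun h0 => hx.2 (h0 ▸ mem_interior_iff_mem_nhds.mpr hU)
  refine ⟨min 1 (m / 2), by positivity, fun x hx => interior_subset ?_⟩
  by_contra hxU
  by_cases hxK : x ∈ K
  · linarith [hle x ⟨hxK, hxU⟩, hx.trans (min_le_right _ _)]
  · exact (hlarge x hxK).not_ge (hx.trans (min_le_left _ _))

theorem IsPosDefFn.fderiv_zero_s10 {E : Type*} [NormedAddCommGroup E] [NormedSpace ℝ E]
    {V : E → ℝ} (hpos : IsPosDefFn V) : fderiv ℝ V 0 = 0 := by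
  refine IsLocalMin.fderiv_eq_zero (.of_forall fun x => ?_)
  rcases eq_or_ne x 0 with rfl | hx
  · rfl
  · exact hpos.1 ▸ (hpos.2 x hx).le

section Hamiltonian

variable {E κ : Type*} [NormedAddCommGroup E] [NormedSpace ℝ E] [Fintype κ]

/-- Minus the Hamiltonian of the control problem with drift `y`, input vectors `c`, costate
`g` and input cost `uᵀRu`, where `S` plays the role of `R⁻¹`: the Hamiltonian is
`min_u g(y + ∑ᵢ uᵢ cᵢ) + uᵀRu = g(y) − ¼ (g(c)) R⁻¹ (g(c))ᵀ`. With `g = ∇V(χ)`, `y = a(χ)` and the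
columns `c` of `b(χ)` this is `−L_aV + ¼ L_bV R⁻¹ (L_bV)ᵀ`. -/
def negHamiltonian (S : Matrix κ κ ℝ) (c : κ → E) (y : E) (g : E →L[ℝ] ℝ) : ℝ :=
  -g y + 1 / 4 * ((fun i => g (c i)) ⬝ᵥ S *ᵥ fun i => g (c i))

theorem negHamiltonian_smul (S : Matrix κ κ ℝ) (c : κ → E) (y : E) (g : E →L[ℝ] ℝ) (t : ℝ) :
    negHamiltonian S c (t • y) (t • g) = t ^ 2 * negHamiltonian S c y g := by
  have hinput : (fun i => (t • g) (c i)) = t • fun i => g (c i) := rfl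
  rw [negHamiltonian, negHamiltonian, hinput]
  simp only [map_smul, _root_.smul_apply, mulVec_smul, dotProduct_smul, smul_dotProduct,
    smul_eq_mul]
  ring

theorem continuous_negHamiltonian (S : Matrix κ κ ℝ) (c : κ → E) :
    Continuous fun z : E × (E →L[ℝ] ℝ) => negHamiltonian S c z.1 z.2 := by
  unfold negHamiltonian
  fun_prop

theorem isLittleO_negHamiltonian_sub {α : Type*} {l : Filter α} (S : Matrix κ κ ℝ)
    {b : α → κ → E} {c : κ → E} {a a₀ : α → E} {g g₀ : α → E →L[ℝ] ℝ} {u : α → ℝ}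
    (hb : Tendsto b l (𝓝 c)) (ha : (fun x => a x - a₀ x) =o[l] u) (ha₀ : a₀ =O[l] u)
    (hg : (fun x => g x - g₀ x) =o[l] u) (hg₀ : g₀ =O[l] u) :
    (fun x => negHamiltonian S (b x) (a x) (g x) - negHamiltonian S c (a₀ x) (g₀ x))
      =o[l] fun x => u x ^ 2 := by
  classical
  let pairing : (E →L[ℝ] ℝ) →L[ℝ] E →L[ℝ] ℝ := .id ℝ _
  let form : (κ → ℝ) →L[ℝ] (κ → ℝ) →L[ℝ] ℝ :=
    (Matrix.toLinearMap₂' ℝ S).toContinuousBilinearMap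
  have hdrift : (fun x => g x (a x) - g₀ x (a₀ x)) =o[l] fun x => u x * u x :=
    isLittleO_bilinear_sub pairing hg hg₀ ha ha₀
  have hinput : (fun x => (fun i => g x (b x i)) - fun i => g₀ x (c i)) =o[l] u := by
    refine isLittleO_pi.mpr fun i => ?_
    have hbi : (fun x => b x i - c i) =o[l] fun _ => (1 : ℝ) :=
      (isLittleO_one_iff ℝ).mpr (tendsto_sub_nhds_zero_iff.mpr (tendsto_pi_nhds.mp hb i))
    exact (isLittleO_bilinear_sub pairing hg hg₀ hbi
      (isBigO_const_const _ one_ne_zero _)).congr_right fun x => mul_one (u x)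
  have hinput₀ : (fun x i => g₀ x (c i)) =O[l] u :=
    isBigO_pi.mpr fun i => ((pairing.flip (c i)).isBigO_comp g₀ l).trans hg₀
  refine (hdrift.neg_left.add
    ((isLittleO_bilinear_sub form hinput hinput₀ hinput hinput₀).const_mul_left (1 / 4))).congr
      (fun x => ?_) fun x => (sq (u x)).symm
  simp only [form, negHamiltonian, LinearMap.toContinuousBilinearMap_apply,
    Matrix.toLinearMap₂'_apply']
  ring

theorem eventually_negHamiltonian_pos [ProperSpace E] {S : Matrix κ κ ℝ} {b : E → κ → E}
    {a : E → E} {A : E →L[ℝ] E} {g : E → E →L[ℝ] ℝ} {H : E →L[ℝ] E →L[ℝ] ℝ}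
    (hb : ContinuousAt b 0) (ha : HasFDerivAt a A 0) (ha0 : a 0 = 0) (hg : HasFDerivAt g H 0)
    (hg0 : g 0 = 0) (hpos : ∀ x ≠ 0, 0 < negHamiltonian S (b 0) (A x) (H x)) :
    ∀ᶠ x in 𝓝[≠] 0, 0 < negHamiltonian S (b x) (a x) (g x) := by
  refine eventually_pos_of_isLittleO_sub (q := fun x => negHamiltonian S (b 0) (A x) (H x))
    ((continuous_negHamiltonian S (b 0)).comp (A.continuous.prodMk H.continuous))
    (fun t x => by simp only [map_smul, negHamiltonian_smul]) hpos ?_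
  refine isLittleO_negHamiltonian_sub S hb ?_ (A.isBigO_id _).norm_right ?_
    (H.isBigO_id _).norm_right
  · simpa [ha0] using ha.isLittleO.norm_right
  · simpa [hg0] using hg.isLittleO.norm_right

end Hamiltonian

section Riccati

theorem dotProduct_mulVec_of_riccati {𝕜 ι κ : Type*} [CommRing 𝕜] [Fintype ι] [Fintype κ]
    {P A Q : Matrix ι ι 𝕜} {B : Matrix ι κ 𝕜} {S : Matrix κ κ 𝕜} (hP : P.IsSymm)
    (h : Aᵀ * P + P * A - P * B * S * Bᵀ * P = -Q) (x : ι → 𝕜) :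
    x ⬝ᵥ Q *ᵥ x = -(2 * (x ⬝ᵥ P *ᵥ A *ᵥ x)) + (x ᵥ* P ᵥ* B) ⬝ᵥ S *ᵥ (x ᵥ* P ᵥ* B) := by
  have hinput : (x ᵥ* P ᵥ* B) ⬝ᵥ S *ᵥ (x ᵥ* P ᵥ* B) = x ⬝ᵥ (P * B * S * Bᵀ * P) *ᵥ x := by
    have hvecMul : x ᵥ* P ᵥ* B = Bᵀ *ᵥ P *ᵥ x := by
      rw [mulVec_transpose, ← vecMul_transpose P, hP.eq]
    conv_lhs => rw [vecMul_vecMul, ← dotProduct_mulVec, ← vecMul_vecMul, hvecMul]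
    simp only [mulVec_mulVec, Matrix.mul_assoc]
  have htranspose : x ⬝ᵥ (Aᵀ * P) *ᵥ x = x ⬝ᵥ P *ᵥ A *ᵥ x := by
    rw [mulVec_mulVec, ← dotProduct_transpose_mulVec, transpose_mul, hP.eq,
      transpose_transpose]
  rw [hinput, ← neg_eq_iff_eq_neg.mpr h]
  simp only [neg_mulVec, sub_mulVec, add_mulVec, dotProduct_neg, dotProduct_sub, dotProduct_add,
    htranspose, ← mulVec_mulVec x P A]
  ring

variable {n : ℕ} {V : (Fin n → ℝ) → ℝ}

theorem fderiv_fderiv_apply_eq_hessianAt (x y z : Fin n → ℝ) :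
    fderiv ℝ (fderiv ℝ V) x y z = y ⬝ᵥ hessianAt V x *ᵥ z := by
  let D : (Fin n → ℝ) →ₗ[ℝ] (Fin n → ℝ) →ₗ[ℝ] ℝ := (fderiv ℝ (fderiv ℝ V) x).toLinearMap₁₂
  have hD : LinearMap.toMatrix₂' ℝ D = hessianAt V x := by
    ext i j
    simp [D, hessianAt, iteratedFDeriv_two_apply, LinearMap.toMatrix₂'_apply]
  rw [← hD, ← Matrix.toLinearMap₂'_apply', Matrix.toLinearMap₂'_toMatrix']
  rfl

theorem isSymm_hessianAt {x : Fin n → ℝ} (hV : ContDiffAt ℝ 2 V x) :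
    (hessianAt V x).IsSymm := by
  have hsymm : IsSymmSndFDerivAt ℝ V x := hV.isSymmSndFDerivAt (by simp)
  ext i j
  simp [hessianAt, iteratedFDeriv_two_apply, hsymm.eq (Pi.single j 1)]

theorem negHamiltonian_of_riccati {κ : Type*} [Fintype κ] {A Q : Matrix (Fin n) (Fin n) ℝ}
    {B : Matrix (Fin n) κ ℝ} {S : Matrix κ κ ℝ} (hV : ContDiffAt ℝ 2 V 0)
    (h : Aᵀ * ((1 / 2 : ℝ) • hessianAt V 0) + ((1 / 2 : ℝ) • hessianAt V 0) * A
      - ((1 / 2 : ℝ) • hessianAt V 0) * B * S * Bᵀ * ((1 / 2 : ℝ) • hessianAt V 0) = -Q)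
    (x : Fin n → ℝ) :
    negHamiltonian S B.col (A *ᵥ x) (fderiv ℝ (fderiv ℝ V) 0 x) = x ⬝ᵥ Q *ᵥ x := by
  have hinput : (fun i => fderiv ℝ (fderiv ℝ V) 0 x (B.col i)) = x ᵥ* hessianAt V 0 ᵥ* B := by
    ext i
    rw [fderiv_fderiv_apply_eq_hessianAt, dotProduct_mulVec]
    rfl
  rw [dotProduct_mulVec_of_riccati ((isSymm_hessianAt hV).smul _) h, negHamiltonian, hinput,
    fderiv_fderiv_apply_eq_hessianAt]
  simp only [smul_mulVec, vecMul_smul, smul_vecMul, mulVec_smul, dotProduct_smul, smul_dotProduct,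
    smul_eq_mul]
  ring

end Riccati

theorem stmt10_general {E κ : Type*} [NormedAddCommGroup E] [NormedSpace ℝ E]
    [FiniteDimensional ℝ E] [Fintype κ] {V : E → ℝ} {a : E → E} {b : E → κ → E}
    {S : Matrix κ κ ℝ} (hV : Continuous V) (hV0 : ContDiffAt ℝ 2 V 0) (hproper : IsProper V)
    (hposdef : IsPosDefFn V) (ha : DifferentiableAt ℝ a 0) (ha0 : a 0 = 0)
    (hb : ContinuousAt b 0)
    (hpos : ∀ x ≠ 0, 0 < negHamiltonian S (b 0) (fderiv ℝ a 0 x) (fderiv ℝ (fderiv ℝ V) 0 x)) :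
    ∃ r₀ > 0, ∀ χ, 0 < V χ → V χ ≤ r₀ → 0 < negHamiltonian S (b χ) (a χ) (fderiv ℝ V χ) := by
  have hgrad : HasFDerivAt (fderiv ℝ V) (fderiv ℝ (fderiv ℝ V) 0) 0 :=
    ((hV0.fderiv_right (m := 1) le_rfl).differentiableAt one_ne_zero).hasFDerivAt
  have hnear := eventually_nhdsWithin_iff.mp <|
    eventually_negHamiltonian_pos hb ha.hasFDerivAt ha0 hgrad hposdef.fderiv_zero_s10 hpos
  obtain ⟨r₀, hr₀, hsub⟩ := hposdef.exists_sublevel_subset hproper hV hnear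
  refine ⟨r₀, hr₀, fun χ hχ hle => hsub χ hle ?_⟩
  rintro rfl
  exact hχ.ne' hposdef.1

/-- If `P := ½ H(V)(0)` solves `AᵀP + PA − PBR⁻¹BᵀP = −Q` with `Q`
positive definite, then on a small sublevel set `{0 < V ≤ r₀}` we have
`−L_aV + ¼ L_bV R⁻¹ (L_bV)ᵀ > 0`. -/
theorem stmt10 {n p : ℕ}
    (V : (Fin n → ℝ) → ℝ)
    (hV : ContDiff ℝ 2 V) (hVnonneg : ∀ χ, 0 ≤ V χ)
    (hVproper : IsProper V) (hVpos : IsPosDefFn V)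
    (hgrad0 : fderiv ℝ V 0 = 0)
    (a : (Fin n → ℝ) → (Fin n → ℝ)) (b : (Fin n → ℝ) → Fin n → Fin p → ℝ)
    (A : Matrix (Fin n) (Fin n) ℝ) (B : Matrix (Fin n) (Fin p) ℝ)
    (R : Matrix (Fin p) (Fin p) ℝ)
    (ha : ContDiff ℝ 1 a) (ha0 : a 0 = 0)
    (hA : ∀ v, fderiv ℝ a 0 v = A.mulVec v)
    (hb : Continuous b) (hB : B = Matrix.of (b 0))
    (hR : R.PosDef)
    (Q : Matrix (Fin n) (Fin n) ℝ) (hQ : Q.PosDef)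
    (hRiccati : Aᵀ * (((1:ℝ)/2) • hessianAt V 0) + (((1:ℝ)/2) • hessianAt V 0) * A
        - (((1:ℝ)/2) • hessianAt V 0) * B * R⁻¹ * Bᵀ * (((1:ℝ)/2) • hessianAt V 0)
        = -Q) :
    ∃ r₀ > (0:ℝ), ∀ χ : Fin n → ℝ, 0 < V χ → V χ ≤ r₀ →
      0 < -(fderiv ℝ V χ (a χ))
        + (1/4) * ((fun i => fderiv ℝ V χ (fun k => b χ k i)) ⬝ᵥ
            R⁻¹.mulVec (fun i => fderiv ℝ V χ (fun k => b χ k i))) := by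
  subst hB
  refine stmt10_general (b := fun χ i k => b χ k i) hV.continuous hV.contDiffAt hVproper hVpos
    (ha.differentiable one_ne_zero 0) ha0 (by fun_prop) fun x hx => ?_
  rw [hA]
  exact (hQ.dotProduct_mulVec_pos hx).trans_eq
    (negHamiltonian_of_riccati hV.contDiffAt hRiccati x).symm
end
end
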